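/- Let t ≥ 2 be an integer and let c = (c_i)_{i≥1} be a cost vector of nonnegative reals with c_i ≥ 1 and c_{i+1} - c_i ≤ c_t for all i ≥ t. For every ρ > 0 there exists n₀ such that for every n > n₀ and every simple graph G on n vertices, π_t(G, c) ≤ π*_t(G, c) + ρ·n^t. -/

import Mathlib

open scoped Classical
open Finset

/-- `K` is a clique of `G`: a nonempty set of pairwise adjacent vertices. -/
def IsCliqueOf {V : Type} [Fintype V] [DecidableEq V] (G : SimpleGraph V) (K : Finset V) : Prop :=
  K.Nonempty ∧ G.IsClique (K : Set V)

/-- Total `c`-cost of a weighting `f` of the finsets of vertices. -/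
noncomputable def cliqueCost {V : Type} [Fintype V] [DecidableEq V]
    (c : ℕ → ℝ) (f : Finset V → ℝ) : ℝ :=
  ∑ K : Finset V, c K.card * f K

/-- `f` is a fractional `t`-clique cover of `G`. -/
def IsFracCover {V : Type} [Fintype V] [DecidableEq V]
    (t : ℕ) (G : SimpleGraph V) (f : Finset V → ℝ) : Prop :=
  (∀ K, 0 ≤ f K) ∧ (∀ K, ¬ IsCliqueOf G K → f K = 0) ∧
  ∀ T : Finset V, T.card = t → G.IsClique (T : Set V) →
    1 ≤ ∑ K ∈ Finset.univ.filter (fun K => T ⊆ K), f K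

/-- `f` is a fractional `t`-clique decomposition of `G`. -/
def IsFracDecomp {V : Type} [Fintype V] [DecidableEq V]
    (t : ℕ) (G : SimpleGraph V) (f : Finset V → ℝ) : Prop :=
  (∀ K, 0 ≤ f K) ∧ (∀ K, ¬ IsCliqueOf G K → f K = 0) ∧
  ∀ T : Finset V, T.card = t → G.IsClique (T : Set V) →
    ∑ K ∈ Finset.univ.filter (fun K => T ⊆ K), f K = 1

/-- `f` is an integer (`{0,1}`-valued) `t`-clique cover of `G`. -/
def IsIntCover {V : Type} [Fintype V] [DecidableEq V]
    (t : ℕ) (G : SimpleGraph V) (f : Finset V → ℝ) : Prop :=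
  IsFracCover t G f ∧ ∀ K, f K = 0 ∨ f K = 1

/-- `f` is an integer (`{0,1}`-valued) `t`-clique decomposition of `G`. -/
def IsIntDecomp {V : Type} [Fintype V] [DecidableEq V]
    (t : ℕ) (G : SimpleGraph V) (f : Finset V → ℝ) : Prop :=
  IsFracDecomp t G f ∧ ∀ K, f K = 0 ∨ f K = 1

/-- θ*_t(G,c): minimum total c-cost of a fractional t-clique cover. -/
noncomputable def thetaFrac {V : Type} [Fintype V] [DecidableEq V]
    (t : ℕ) (G : SimpleGraph V) (c : ℕ → ℝ) : ℝ :=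
  sInf { x | ∃ f, IsFracCover t G f ∧ x = cliqueCost c f }

/-- θ_t(G,c): minimum total c-cost of an integer t-clique cover. -/
noncomputable def thetaInt {V : Type} [Fintype V] [DecidableEq V]
    (t : ℕ) (G : SimpleGraph V) (c : ℕ → ℝ) : ℝ :=
  sInf { x | ∃ f, IsIntCover t G f ∧ x = cliqueCost c f }

/-- π*_t(G,c): minimum total c-cost of a fractional t-clique decomposition. -/
noncomputable def piFrac {V : Type} [Fintype V] [DecidableEq V]
    (t : ℕ) (G : SimpleGraph V) (c : ℕ → ℝ) : ℝ :=
  sInf { x | ∃ f, IsFracDecomp t G f ∧ x = cliqueCost c f }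

/-- π_t(G,c): minimum total c-cost of an integer t-clique decomposition. -/
noncomputable def piInt {V : Type} [Fintype V] [DecidableEq V]
    (t : ℕ) (G : SimpleGraph V) (c : ℕ → ℝ) : ℝ :=
  sInf { x | ∃ f, IsIntDecomp t G f ∧ x = cliqueCost c f }

/-- `G` is complete multipartite: vertices can be assigned to parts so that
adjacency holds exactly between distinct parts. -/
def IsCompleteMultipartite {V : Type} [Fintype V] [DecidableEq V]
    (G : SimpleGraph V) : Prop :=
  ∃ p : V → ℕ, ∀ u v, G.Adj u v ↔ p u ≠ p v

/-- Independent random subsets: for nonnegative rates `μ` there is a probability weight on the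
subsets of `κ` for which `S` is missed with probability `exp (-μ(S))`. -/
lemma exists_poisson_weight {κ : Type*} [Fintype κ] [DecidableEq κ] (μ : κ → ℝ)
    (hμ : ∀ k, 0 ≤ μ k) :
    ∃ P : Finset κ → ℝ, (∀ C, 0 ≤ P C) ∧
      (∀ S : Finset κ, ∑ C, (if Disjoint C S then P C else 0) = Real.exp (-∑ k ∈ S, μ k)) ∧
      ∀ (S : Finset κ) (k : κ), k ∉ S → ∑ C, (if k ∈ C ∧ Disjoint C S then P C else 0) =
        (1 - Real.exp (-μ k)) * Real.exp (-∑ k ∈ S, μ k) := by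
  set P : Finset κ → ℝ := fun C =>
    (∏ k ∈ C, (1 - Real.exp (-μ k))) * ∏ k ∈ univ \ C, Real.exp (-μ k) with hP
  have hmiss : ∀ S : Finset κ,
      ∑ C, (if Disjoint C S then P C else 0) = Real.exp (-∑ k ∈ S, μ k) := by
    intro S
    have h := Finset.prod_add (fun k => if k ∈ S then 0 else 1 - Real.exp (-μ k))
      (fun k => Real.exp (-μ k)) (univ : Finset κ)
    rw [powerset_univ] at h
    have h2 : ∀ C : Finset κ, (if Disjoint C S then P C else 0) =
        (∏ k ∈ C, if k ∈ S then (0 : ℝ) else 1 - Real.exp (-μ k)) *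
          ∏ k ∈ univ \ C, Real.exp (-μ k) := by
      intro C
      split_ifs with hd
      · simp only [hP]
        congr 1
        refine prod_congr rfl fun k hk => ?_
        rw [if_neg (disjoint_left.1 hd hk)]
      · obtain ⟨k, hk, hkS⟩ := not_disjoint_iff.1 hd
        rw [prod_eq_zero hk (by simp [hkS]), zero_mul]
    rw [sum_congr rfl fun C _ => h2 C, ← h, ← sum_neg_distrib, Real.exp_sum,
      ← Finset.prod_subset (subset_univ S)]
    · refine prod_congr rfl fun k hk => ?_
      simp [hk]
    · intro k _ hk
      simp [hk]
  refine ⟨P, fun C => ?_, hmiss, fun S k hk => ?_⟩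
  · refine mul_nonneg (prod_nonneg fun k _ => ?_) (prod_nonneg fun k _ => (Real.exp_pos _).le)
    have := Real.exp_le_one_iff.2 (neg_nonpos.2 (hμ k))
    linarith
  · have h1 := hmiss S
    have h2 := hmiss (insert k S)
    rw [sum_insert hk, neg_add, Real.exp_add] at h2
    have : ∀ C : Finset κ, (if k ∈ C ∧ Disjoint C S then P C else 0) =
        (if Disjoint C S then P C else 0) - if Disjoint C (insert k S) then P C else 0 := by
      intro C
      by_cases h : k ∈ C <;> by_cases h' : Disjoint C S <;>
        simp [h, h', Finset.disjoint_insert_right]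
    rw [sum_congr rfl fun C _ => this C, sum_sub_distrib, h1, h2]
    ring

/-- The total weight of the edges through a vertex. -/
def vertexLoad {ι α : Type*} [Fintype ι] [DecidableEq α] (e : ι → Finset α) (F : ι → ℝ)
    (x : α) : ℝ :=
  ∑ i, if x ∈ e i then F i else 0

/-- An overloaded weighting can be lowered to a fractional matching at the cost of the total
excess load. -/
lemma exists_le_load_le_one {ι α : Type*} [Fintype ι] [Fintype α] [DecidableEq α]
    (e : ι → Finset α) (F : ι → ℝ) (hF : ∀ i, 0 ≤ F i) :
    ∃ F' : ι → ℝ, (∀ i, 0 ≤ F' i) ∧ (∀ i, F' i ≤ F i) ∧ (∀ x, vertexLoad e F' x ≤ 1) ∧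
      ∑ i, (F i - F' i) ≤ ∑ x, max (vertexLoad e F x - 1) 0 := by
  set ℓ := vertexLoad e F with hℓ
  set a : ι → ℝ := fun i => ∑ x ∈ e i, max (ℓ x - 1) 0 / max (ℓ x) 1 with ha
  have hterm : ∀ x, 0 ≤ max (ℓ x - 1) 0 / max (ℓ x) 1 := fun x => by positivity
  have ha0 : ∀ i, 0 ≤ a i := fun i => sum_nonneg fun x _ => hterm x
  have hle : ∀ i, F i * max (1 - a i) 0 ≤ F i := fun i =>
    mul_le_of_le_one_right (hF i) (max_le (by linarith [ha0 i]) zero_le_one)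
  refine ⟨fun i => F i * max (1 - a i) 0, fun i => mul_nonneg (hF i) (le_max_right _ _), hle,
    fun x => ?_, ?_⟩
  · rcases le_total (ℓ x) 1 with h | h
    · refine le_trans (sum_le_sum fun i _ => ?_) h
      split_ifs
      · exact hle i
      · exact le_rfl
    · have hpos : 0 < ℓ x := by linarith
      have hx : ∀ i, (if x ∈ e i then F i * max (1 - a i) 0 else 0) ≤
          (if x ∈ e i then F i else 0) * (ℓ x)⁻¹ := by
        intro i
        split_ifs with hi
        · refine mul_le_mul_of_nonneg_left (max_le ?_ (by positivity)) (hF i)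
          have h1 : max (ℓ x - 1) 0 / max (ℓ x) 1 ≤ a i :=
            single_le_sum (f := fun x => max (ℓ x - 1) 0 / max (ℓ x) 1) (fun y _ => hterm y) hi
          rw [max_eq_left (by linarith), max_eq_left h, sub_div, div_self hpos.ne'] at h1
          rw [inv_eq_one_div]
          linarith
        · simp
      calc _ ≤ ∑ i, (if x ∈ e i then F i else 0) * (ℓ x)⁻¹ := sum_le_sum fun i _ => hx i
        _ = ℓ x * (ℓ x)⁻¹ := by rw [← sum_mul]; rfl
        _ = 1 := mul_inv_cancel₀ hpos.ne'
  · calc ∑ i, (F i - F i * max (1 - a i) 0) ≤ ∑ i, F i * a i := by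
          refine sum_le_sum fun i _ => ?_
          have := mul_le_mul_of_nonneg_left (le_max_left (1 - a i) 0) (hF i)
          linarith
      _ = ∑ i, ∑ x, (if x ∈ e i then F i else 0) * (max (ℓ x - 1) 0 / max (ℓ x) 1) := by
          refine sum_congr rfl fun i _ => ?_
          rw [ha, mul_sum, ← sum_subset (subset_univ (e i))]
          · exact sum_congr rfl fun x hx => by rw [if_pos hx]
          · intro x _ hx
            rw [if_neg hx, zero_mul]
      _ = ∑ x, ℓ x * (max (ℓ x - 1) 0 / max (ℓ x) 1) := by
          rw [sum_comm]
          exact sum_congr rfl fun x _ => by rw [← sum_mul]; rfl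
      _ ≤ _ := by
          refine sum_le_sum fun x _ => ?_
          rw [mul_div_assoc', div_le_iff₀ (by positivity), mul_comm]
          exact mul_le_mul_of_nonneg_left (le_max_left _ _) (le_max_right _ _)

lemma exists_le_of_weighted_average {κ : Type*} [Fintype κ] (P V : κ → ℝ) (hP : ∀ C, 0 ≤ P C)
    (hP1 : ∑ C, P C = 1) (b : ℝ) (hb : b ≤ ∑ C, P C * V C) : ∃ C, b ≤ V C := by
  by_contra! h
  have h0 : ∑ C, P C * (b - V C) ≤ 0 := by
    simp only [mul_sub, sum_sub_distrib, ← sum_mul, hP1]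
    linarith
  have h1 : ∀ C ∈ univ, 0 ≤ P C * (b - V C) := fun C _ =>
    mul_nonneg (hP C) (by linarith [h C])
  have h2 := (sum_eq_zero_iff_of_nonneg h1).1 (le_antisymm h0 (sum_nonneg h1))
  have h3 : ∑ C, P C = 0 := sum_eq_zero fun C hC =>
    (mul_eq_zero.1 (h2 C hC)).resolve_right (by linarith [h C])
  linarith

/-- The weight of the edges meeting `Y`, plus the missing load of the vertices of `Y`. -/
def hitWeight {ι α : Type*} [Fintype ι] [DecidableEq α] (e : ι → Finset α) (F : ι → ℝ)
    (Y : Finset α) : ℝ :=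
  (∑ i, if Disjoint (e i) Y then 0 else F i) + ∑ x ∈ Y, (1 - vertexLoad e F x)

lemma sum_vertexLoad {ι α : Type*} [Fintype ι] [DecidableEq α] (e : ι → Finset α) (F : ι → ℝ)
    (Y : Finset α) : ∑ x ∈ Y, vertexLoad e F x = ∑ i, ((e i ∩ Y).card : ℝ) * F i := by
  simp only [vertexLoad]
  rw [sum_comm]
  refine sum_congr rfl fun i _ => ?_
  rw [← sum_filter, sum_const, nsmul_eq_mul, inter_comm, filter_mem_eq_inter]

lemma hitWeight_le {ι α : Type*} [Fintype ι] [DecidableEq α] (e : ι → Finset α) (F : ι → ℝ)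
    (hF : ∀ i, 0 ≤ F i) (Y : Finset α) : hitWeight e F Y ≤ Y.card := by
  rw [hitWeight, sum_sub_distrib, sum_vertexLoad]
  have : (∑ i, if Disjoint (e i) Y then 0 else F i) ≤ ∑ i, ((e i ∩ Y).card : ℝ) * F i := by
    refine sum_le_sum fun i _ => ?_
    split_ifs with h
    · exact mul_nonneg (Nat.cast_nonneg _) (hF i)
    · refine le_mul_of_one_le_left (hF i) ?_
      rw [disjoint_iff_inter_eq_empty, ← ne_eq, ← nonempty_iff_ne_empty] at h
      exact_mod_cast h.card_pos
  simp
  linarith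

lemma le_hitWeight {ι α : Type*} [Fintype ι] [DecidableEq α] (e : ι → Finset α) (F : ι → ℝ)
    (hF : ∀ i, 0 ≤ F i) {δ : ℝ} (hδ : 0 ≤ δ)
    (hcod : ∀ x y, x ≠ y → (∑ i, if x ∈ e i ∧ y ∈ e i then F i else 0) ≤ δ) (Y : Finset α) :
    Y.card - (Y.card : ℝ) ^ 2 * δ ≤ hitWeight e F Y := by
  rw [hitWeight, sum_sub_distrib, sum_vertexLoad]
  have h1 : ∑ p ∈ Y.offDiag, (∑ i, if p.1 ∈ e i ∧ p.2 ∈ e i then F i else 0) ≤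
      (Y.card : ℝ) ^ 2 * δ := by
    calc _ ≤ ∑ p ∈ Y.offDiag, δ := sum_le_sum fun p hp => hcod _ _ (mem_offDiag.1 hp).2.2
      _ = (Y.offDiag.card : ℝ) * δ := by rw [sum_const, nsmul_eq_mul]
      _ ≤ _ := by
        refine mul_le_mul_of_nonneg_right ?_ hδ
        rw [offDiag_card, ← sq]
        exact_mod_cast Nat.sub_le _ _
  rw [sum_comm] at h1
  have h2 : (∑ i, ((e i ∩ Y).card : ℝ) * F i) ≤ (∑ i, if Disjoint (e i) Y then 0 else F i) +
      ∑ i, ∑ p ∈ Y.offDiag, if p.1 ∈ e i ∧ p.2 ∈ e i then F i else 0 := by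
    rw [← sum_add_distrib]
    refine sum_le_sum fun i _ => ?_
    have h3 : (∑ p ∈ Y.offDiag, if p.1 ∈ e i ∧ p.2 ∈ e i then F i else 0) =
        ((e i ∩ Y).offDiag.card : ℝ) * F i := by
      rw [← sum_filter, sum_const, nsmul_eq_mul]
      congr 3
      ext p
      simp only [mem_filter, mem_offDiag, mem_inter]
      tauto
    rw [h3]
    split_ifs with h
    · rw [disjoint_iff_inter_eq_empty] at h
      simp [h]
    · rw [disjoint_iff_inter_eq_empty, ← ne_eq, ← nonempty_iff_ne_empty] at h
      have hpos := h.card_pos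
      have h4 : ((e i ∩ Y).card : ℝ) ≤ 1 + (e i ∩ Y).offDiag.card := by
        rw [offDiag_card]
        have : (e i ∩ Y).card ≤ 1 + ((e i ∩ Y).card * (e i ∩ Y).card - (e i ∩ Y).card) := by
          rcases Nat.exists_eq_add_of_lt hpos with ⟨k, hk⟩
          rw [hk, Nat.zero_add, Nat.succ_mul, Nat.add_sub_cancel]
          nlinarith
        exact_mod_cast this
      nlinarith [hF i]
  simp
  linarith

/-- One round of the random process covering vertices: edges are selected at rate `η`, isolated
selected edges are kept, and the surviving edges are reweighted. -/
lemma nibble_step {ι α : Type*} [Fintype ι] [Fintype α] [DecidableEq ι] [DecidableEq α]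
    (e : ι → Finset α) (F w : ι → ℝ) (hF : ∀ i, 0 ≤ F i) {r : ℕ}
    (hne : ∀ i, (e i).Nonempty) (hr : ∀ i, (e i).card ≤ r) (hw0 : ∀ i, 0 ≤ w i)
    (hload : ∀ x, vertexLoad e F x ≤ 1) {δ : ℝ} (hδ : 0 ≤ δ)
    (hcod : ∀ x y, x ≠ y → (∑ i, if x ∈ e i ∧ y ∈ e i then F i else 0) ≤ δ)
    {η κ β : ℝ} (hη : 0 < η) (hκ : 0 < κ) (hβ : 0 ≤ β) :
    ∃ (M : Finset ι) (F₁ : ι → ℝ), (∀ i ∈ M, F i ≠ 0) ∧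
      (∀ i ∈ M, ∀ j ∈ M, i ≠ j → Disjoint (e i) (e j)) ∧ (∀ i, 0 ≤ F₁ i) ∧
      (∀ i, F₁ i ≠ 0 → F i ≠ 0 ∧ ∀ j ∈ M, Disjoint (e i) (e j)) ∧
      (∀ i, F₁ i ≤ F i * Real.exp (η * r)) ∧
      (Real.exp (-(η * r)) * (1 - Real.exp (-η)) + β * Real.exp (-η)) * (∑ i, F i * w i) -
          β * (Fintype.card α * (κ / 2 + (2 * κ)⁻¹ *
            (Real.exp (4 * r ^ 2 * δ * η) - 1 + Real.exp (2 * r * η) * (r * δ)))) ≤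
        ∑ i ∈ M, w i + β * (∑ i, F₁ i * w i - ∑ x, max (vertexLoad e F₁ x - 1) 0) := by
  set ℓ := vertexLoad e F with hℓ
  have hℓ0 : ∀ x, 0 ≤ ℓ x := fun x => sum_nonneg fun i _ => by split_ifs <;> simp [hF]
  obtain ⟨P, hP0, hPmiss, hPsel⟩ := exists_poisson_weight
    (Sum.elim (fun i => η * F i) (fun x => η * (1 - ℓ x)) : ι ⊕ α → ℝ) (by
      rintro (i | x)
      · exact mul_nonneg hη.le (hF i)
      · exact mul_nonneg hη.le (by linarith [hload x]))
  set blk : Finset α → Finset (ι ⊕ α) := fun Y =>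
    (univ.filter fun i => ¬ Disjoint (e i) Y).disjSum Y with hblk
  have hblk_sum : ∀ Y, ∑ k ∈ blk Y, (Sum.elim (fun i => η * F i) (fun x => η * (1 - ℓ x)) k) =
      η * hitWeight e F Y := by
    intro Y
    rw [hblk, sum_disjSum]
    simp only [Sum.elim_inl, Sum.elim_inr, hitWeight, mul_add, mul_sum, ← hℓ]
    congr 1
    rw [sum_filter]
    refine sum_congr rfl fun i _ => ?_
    by_cases h : Disjoint (e i) Y <;> simp [h]
  have hblk_union : ∀ Y Z, blk (Y ∪ Z) = blk Y ∪ blk Z := by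
    intro Y Z
    ext (i | x)
    · simp [hblk, disjoint_union_right]; tauto
    · simp [hblk]
  have hblk_mono : ∀ Y Z, Y ⊆ Z → blk Y ⊆ blk Z := by
    intro Y Z h
    rw [← union_eq_right.2 h, hblk_union]
    exact subset_union_left
  -- indicator that `Y` is untouched
  set ind : Finset α → Finset (ι ⊕ α) → ℝ := fun Y C => if Disjoint C (blk Y) then 1 else 0
    with hind
  have hE : ∀ Y, ∑ C, P C * ind Y C = Real.exp (-(η * hitWeight e F Y)) := by
    intro Y
    rw [← hblk_sum, ← hPmiss]
    exact sum_congr rfl fun C _ => by simp [hind]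
  have hsum1 : ∑ C, P C = 1 := by simpa using hPmiss ∅
  have hEle : ∀ Y, Real.exp (-(η * Y.card)) ≤ ∑ C, P C * ind Y C := by
    intro Y
    rw [hE, Real.exp_le_exp, neg_le_neg_iff]
    exact mul_le_mul_of_nonneg_left (hitWeight_le e F hF Y) hη.le
  have hEge : ∀ Y, ∑ C, P C * ind Y C ≤
      Real.exp (-(η * (Y.card - (Y.card : ℝ) ^ 2 * δ))) := by
    intro Y
    rw [hE, Real.exp_le_exp, neg_le_neg_iff]
    exact mul_le_mul_of_nonneg_left (le_hitWeight e F hF hδ hcod Y) hη.le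
  have hEle1 : ∀ Y, ∑ C, P C * ind Y C ≤ 1 := by
    intro Y
    rw [← hsum1]
    refine sum_le_sum fun C _ => mul_le_of_le_one_right (hP0 C) ?_
    simp only [hind]; split_ifs <;> norm_num
  set g : ι → ℝ := fun i => Real.exp (η * ((e i).card - 1)) with hg
  set F₁ : Finset (ι ⊕ α) → ι → ℝ := fun C i => F i * g i * ind (e i) C with hF₁
  set M : Finset (ι ⊕ α) → Finset ι := fun C =>
    univ.filter fun i => F i ≠ 0 ∧ Sum.inl i ∈ C ∧ Disjoint C ((blk (e i)).erase (Sum.inl i))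
    with hM
  have hind0 : ∀ Y C, 0 ≤ ind Y C := fun Y C => by simp only [hind]; split_ifs <;> norm_num
  have hind1 : ∀ Y C, ind Y C ≤ 1 := fun Y C => by simp only [hind]; split_ifs <;> norm_num
  have hF₁0 : ∀ C i, 0 ≤ F₁ C i := fun C i =>
    mul_nonneg (mul_nonneg (hF i) (Real.exp_pos _).le) (hind0 _ _)
  have hF1 : ∀ i, F i ≤ 1 := by
    intro i
    obtain ⟨x, hx⟩ := hne i
    refine le_trans ?_ (hload x)
    have := single_le_sum (f := fun i => if x ∈ e i then F i else 0) (s := univ)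
      (fun i _ => by split_ifs <;> simp [hF]) (mem_univ i)
    simpa [hx, hℓ, vertexLoad] using this
  have hgE : ∀ i, Real.exp (-η) ≤ g i * ∑ C, P C * ind (e i) C := by
    intro i
    refine le_trans (le_of_eq ?_) (mul_le_mul_of_nonneg_left (hEle (e i)) (Real.exp_pos _).le)
    rw [hg, ← Real.exp_add]
    ring_nf
  -- expectation of the kept weight
  have hEM : Real.exp (-(η * r)) * (1 - Real.exp (-η)) * (∑ i, F i * w i) ≤
      ∑ C, P C * ∑ i ∈ M C, w i := by
    have h1 : ∀ i, Real.exp (-(η * r)) * (1 - Real.exp (-η)) * (F i * w i) ≤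
        (∑ C, if i ∈ M C then P C else 0) * w i := by
      intro i
      rw [← mul_assoc]
      refine mul_le_mul_of_nonneg_right ?_ (hw0 i)
      by_cases h0 : F i = 0
      · simp only [h0, mul_zero]
        exact sum_nonneg fun C _ => by split_ifs <;> simp [hP0]
      · have h2 : (∑ C, if i ∈ M C then P C else 0) =
            ∑ C, if Sum.inl i ∈ C ∧ Disjoint C ((blk (e i)).erase (Sum.inl i)) then P C else 0 :=
          sum_congr rfl fun C _ => by simp [hM, h0]
        rw [h2, hPsel _ _ (notMem_erase _ _), Sum.elim_inl]
        have h3 : F i * (1 - Real.exp (-η)) ≤ 1 - Real.exp (-(η * F i)) := by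
          have := convexOn_exp.2 (Set.mem_univ (-η)) (Set.mem_univ 0) (hF i)
            (sub_nonneg.2 (hF1 i)) (by ring)
          simp only [smul_eq_mul, mul_zero, add_zero, Real.exp_zero, mul_one] at this
          rw [show F i * -η = -(η * F i) by ring] at this
          linarith
        have h4 : Real.exp (-(η * r)) ≤ Real.exp (-∑ k ∈ (blk (e i)).erase (Sum.inl i),
            Sum.elim (fun i => η * F i) (fun x => η * (1 - ℓ x)) k) := by
          rw [Real.exp_le_exp, neg_le_neg_iff]
          calc _ ≤ ∑ k ∈ blk (e i), Sum.elim (fun i => η * F i) (fun x => η * (1 - ℓ x)) k := by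
                refine sum_le_sum_of_subset_of_nonneg (erase_subset _ _) ?_
                rintro (j | x) _ _
                · exact mul_nonneg hη.le (hF j)
                · exact mul_nonneg hη.le (by linarith [hload x])
            _ = η * hitWeight e F (e i) := hblk_sum _
            _ ≤ η * r := by
                refine mul_le_mul_of_nonneg_left ((hitWeight_le e F hF _).trans ?_) hη.le
                exact_mod_cast hr i
        have h5 : 0 ≤ F i * (1 - Real.exp (-η)) :=
          mul_nonneg (hF i) (by
            have := Real.exp_le_one_iff.2 (neg_nonpos.2 hη.le)
            linarith)
        calc _ = (F i * (1 - Real.exp (-η))) * Real.exp (-(η * r)) := by ring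
          _ ≤ _ := mul_le_mul h3 h4 (Real.exp_pos _).le (h5.trans h3)
    calc _ = ∑ i, Real.exp (-(η * r)) * (1 - Real.exp (-η)) * (F i * w i) := by rw [mul_sum]
      _ ≤ ∑ i, (∑ C, if i ∈ M C then P C else 0) * w i := sum_le_sum fun i _ => h1 i
      _ = ∑ C, ∑ i, (if i ∈ M C then P C else 0) * w i := by
          rw [sum_comm]
          exact sum_congr rfl fun i _ => by rw [sum_mul]
      _ = _ := by
          refine sum_congr rfl fun C _ => ?_
          rw [mul_sum, ← sum_subset (subset_univ (M C))]
          · exact sum_congr rfl fun i hi => by rw [if_pos hi]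
          · intro i _ hi
            rw [if_neg hi, zero_mul]
  -- expectation of the surviving weight
  have hEF : Real.exp (-η) * (∑ i, F i * w i) ≤ ∑ C, P C * ∑ i, F₁ C i * w i := by
    have h1 : ∑ C, P C * ∑ i, F₁ C i * w i = ∑ i, F i * w i * (g i * ∑ C, P C * ind (e i) C) := by
      simp only [mul_sum]
      rw [sum_comm]
      exact sum_congr rfl fun i _ => sum_congr rfl fun C _ => by simp only [hF₁]; ring
    rw [h1, mul_sum]
    refine sum_le_sum fun i _ => ?_
    rw [mul_comm]
    exact mul_le_mul_of_nonneg_left (hgE i) (mul_nonneg (hF i) (hw0 i))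
  -- expectation of the excess
  have hEX : ∀ x, ∑ C, P C * max (vertexLoad e (F₁ C) x - 1) 0 ≤ κ / 2 + (2 * κ)⁻¹ *
      (Real.exp (4 * r ^ 2 * δ * η) - 1 + Real.exp (2 * r * η) * (r * δ)) := by
    intro x
    set m : Finset (ι ⊕ α) → ℝ := fun C => vertexLoad e (F₁ C) x with hm
    have hpt : ∀ C, max (m C - 1) 0 ≤
        κ / 2 + (2 * κ)⁻¹ * (m C * m C - 2 * ℓ x * m C + ℓ x ^ 2 * ind {x} C) := by
      intro C
      by_cases h : Disjoint C (blk {x})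
      · have h1 : ind {x} C = 1 := by simp [hind, h]
        rw [h1]
        have h2 : 0 ≤ κ / 2 + (2 * κ)⁻¹ * (m C * m C - 2 * ℓ x * m C + ℓ x ^ 2 * 1) -
            (m C - ℓ x) := by
          have : κ / 2 + (2 * κ)⁻¹ * (m C * m C - 2 * ℓ x * m C + ℓ x ^ 2 * 1) - (m C - ℓ x) =
              (2 * κ)⁻¹ * (m C - ℓ x - κ) ^ 2 := by
            field_simp
            ring
          rw [this]
          positivity
        refine max_le (by linarith [hload x]) ?_
        have : m C * m C - 2 * ℓ x * m C + ℓ x ^ 2 * 1 = (m C - ℓ x) ^ 2 := by ring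
        rw [this]
        positivity
      · have h1 : ind {x} C = 0 := by simp [hind, h]
        have h2 : m C = 0 := by
          refine sum_eq_zero fun i _ => ?_
          split_ifs with hi
          · have : ¬ Disjoint C (blk (e i)) := fun hd =>
              h (disjoint_of_subset_right (hblk_mono _ _ (singleton_subset_iff.2 hi)) hd)
            simp [hF₁, hind, this]
          · rfl
        rw [h1, h2]
        simp
        positivity
    have hm1 : Real.exp (-η) * ℓ x ≤ ∑ C, P C * m C := by
      have h1 : ∑ C, P C * m C =
          ∑ i, (if x ∈ e i then F i else 0) * (g i * ∑ C, P C * ind (e i) C) := by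
        simp only [hm, vertexLoad, mul_sum]
        rw [sum_comm]
        exact sum_congr rfl fun i _ => sum_congr rfl fun C _ => by
          simp only [hF₁]
          split_ifs <;> ring
      rw [h1, hℓ, vertexLoad, mul_sum]
      refine sum_le_sum fun i _ => ?_
      rw [mul_comm]
      exact mul_le_mul_of_nonneg_left (hgE i) (by split_ifs <;> simp [hF])
    have hx1 : ∑ C, P C * ind {x} C = Real.exp (-η) := by
      rw [hE, hitWeight]
      have : (∑ i, if Disjoint (e i) {x} then 0 else F i) = vertexLoad e F x := by
        refine sum_congr rfl fun i _ => ?_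
        by_cases h : x ∈ e i <;> simp [h]
      rw [this, sum_singleton]
      ring_nf
    set u : ι → ℝ := fun i => if x ∈ e i then F i else 0 with hu
    have hu0 : ∀ i, 0 ≤ u i := fun i => by simp only [hu]; split_ifs <;> simp [hF]
    have husum : ∑ i, u i = ℓ x := rfl
    have hpair : ∀ i j, u i * u j * (g i * g j * ∑ C, P C * ind (e i ∪ e j) C) ≤
        u i * u j * (Real.exp (-η) * Real.exp (4 * r ^ 2 * δ * η) +
          Real.exp (2 * r * η) * ∑ y ∈ (e i).erase x, if y ∈ e j then 1 else 0) := by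
      intro i j
      by_cases hi : x ∈ e i
      swap
      · simp [hu, hi]
      by_cases hj : x ∈ e j
      swap
      · simp [hu, hj]
      refine mul_le_mul_of_nonneg_left ?_ (mul_nonneg (hu0 i) (hu0 j))
      have hri : ((e i).card : ℝ) ≤ r := by exact_mod_cast hr i
      have hrj : ((e j).card : ℝ) ≤ r := by exact_mod_cast hr j
      have hgg : g i * g j = Real.exp (η * ((e i).card + (e j).card - 2)) := by
        rw [hg, ← Real.exp_add]
        ring_nf
      by_cases hd : ∃ y ∈ (e i).erase x, y ∈ e j
      · obtain ⟨y, hy, hyj⟩ := hd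
        have h1 : (1 : ℝ) ≤ ∑ y ∈ (e i).erase x, if y ∈ e j then 1 else 0 := by
          have := single_le_sum (f := fun y => if y ∈ e j then (1 : ℝ) else 0)
            (fun y _ => by split_ifs <;> norm_num) hy
          simpa [hyj] using this
        have h2 : g i * g j ≤ Real.exp (2 * r * η) := by
          rw [hgg, Real.exp_le_exp]
          nlinarith
        have h3 : g i * g j * ∑ C, P C * ind (e i ∪ e j) C ≤ g i * g j :=
          mul_le_of_le_one_right (by positivity) (hEle1 _)
        have h4 := mul_le_mul_of_nonneg_left h1 (Real.exp_pos (2 * r * η)).le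
        have h5 : 0 ≤ Real.exp (-η) * Real.exp (4 * r ^ 2 * δ * η) := by positivity
        linarith
      · push Not at hd
        have h1 : e i ∩ e j = {x} := by
          ext y
          simp only [mem_inter, mem_singleton]
          constructor
          · rintro ⟨h, h'⟩
            by_contra hyx
            exact hd y (mem_erase.2 ⟨hyx, h⟩) h'
          · rintro rfl
            exact ⟨hi, hj⟩
        have h2 : (((e i ∪ e j).card : ℕ) : ℝ) = (e i).card + (e j).card - 1 := by
          have := card_union_add_card_inter (e i) (e j)
          rw [h1, card_singleton] at this
          rw [← Nat.cast_add, ← this]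
          push_cast
          ring
        have h3 : g i * g j * ∑ C, P C * ind (e i ∪ e j) C ≤
            Real.exp (-η) * Real.exp (4 * r ^ 2 * δ * η) := by
          calc _ ≤ g i * g j * Real.exp (-(η * (((e i ∪ e j).card : ℕ) -
                (((e i ∪ e j).card : ℕ) : ℝ) ^ 2 * δ))) :=
                mul_le_mul_of_nonneg_left (hEge _) (by positivity)
            _ ≤ _ := by
                rw [hgg, ← Real.exp_add, ← Real.exp_add, Real.exp_le_exp, h2]
                have h6 : ((e i).card + (e j).card - 1 : ℝ) ^ 2 ≤ (2 * r) ^ 2 := by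
                  rw [← h2]
                  refine pow_le_pow_left₀ (Nat.cast_nonneg _) ?_ 2
                  rw [h2]
                  linarith
                have h7 := mul_le_mul_of_nonneg_right h6 (mul_nonneg hδ hη.le)
                nlinarith
        have h4 : 0 ≤ Real.exp (2 * r * η) *
            ∑ y ∈ (e i).erase x, if y ∈ e j then (1 : ℝ) else 0 :=
          mul_nonneg (Real.exp_pos _).le (sum_nonneg fun y _ => by split_ifs <;> norm_num)
        linarith
    have hm2 : ∑ C, P C * (m C * m C) ≤ ℓ x ^ 2 * (Real.exp (-η) * Real.exp (4 * r ^ 2 * δ * η)) +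
        Real.exp (2 * r * η) * (r * δ) := by
      have h1 : ∑ C, P C * (m C * m C) =
          ∑ i, ∑ j, u i * u j * (g i * g j * ∑ C, P C * ind (e i ∪ e j) C) := by
        have h2 : ∀ C, P C * (m C * m C) =
            ∑ i, ∑ j, u i * u j * (g i * g j * (P C * ind (e i ∪ e j) C)) := by
          intro C
          simp only [hm, vertexLoad]
          rw [sum_mul_sum, mul_sum]
          refine sum_congr rfl fun i _ => ?_
          rw [mul_sum]
          refine sum_congr rfl fun j _ => ?_
          have h3 : ind (e i ∪ e j) C = ind (e i) C * ind (e j) C := by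
            simp only [hind, hblk_union, disjoint_union_right]
            by_cases h : Disjoint C (blk (e i)) <;> by_cases h' : Disjoint C (blk (e j)) <;>
              simp [h, h']
          rw [h3]
          simp only [hF₁, hu]
          split_ifs <;> ring
        simp only [h2, mul_sum]
        rw [sum_comm]
        exact sum_congr rfl fun i _ => sum_comm
      rw [h1]
      refine (sum_le_sum fun i _ => sum_le_sum fun j _ => hpair i j).trans ?_
      have h4 : ∀ i, ∑ j, u i * u j * ∑ y ∈ (e i).erase x, (if y ∈ e j then (1 : ℝ) else 0) ≤
          u i * (r * δ) := by
        intro i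
        simp only [mul_assoc]
        rw [← mul_sum]
        refine mul_le_mul_of_nonneg_left ?_ (hu0 i)
        simp only [mul_sum]
        rw [sum_comm]
        calc _ ≤ ∑ y ∈ (e i).erase x, δ := by
              refine sum_le_sum fun y hy => le_trans (le_of_eq ?_)
                (hcod x y (ne_of_mem_erase hy).symm)
              refine sum_congr rfl fun j _ => ?_
              by_cases h : x ∈ e j <;> by_cases h' : y ∈ e j <;> simp [hu, h, h']
          _ = ((e i).erase x).card * δ := by rw [sum_const, nsmul_eq_mul]
          _ ≤ _ := by
              refine mul_le_mul_of_nonneg_right ?_ hδ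
              exact_mod_cast (card_le_card (erase_subset _ _)).trans (hr i)
      have h5 : ∑ i, ∑ j, u i * u j * ∑ y ∈ (e i).erase x, (if y ∈ e j then (1 : ℝ) else 0) ≤
          r * δ := by
        refine (sum_le_sum fun i _ => h4 i).trans ?_
        rw [← sum_mul, husum]
        exact mul_le_of_le_one_left (by positivity) (hload x)
      have h6 := mul_le_mul_of_nonneg_left h5 (Real.exp_pos (2 * r * η)).le
      refine le_trans (le_of_eq ?_) (add_le_add_right h6 _)
      rw [← husum, sq (∑ i, u i), sum_mul_sum, sum_mul, mul_sum, ← sum_add_distrib]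
      refine sum_congr rfl fun i _ => ?_
      rw [sum_mul, mul_sum, ← sum_add_distrib]
      exact sum_congr rfl fun j _ => by ring
    calc _ ≤ ∑ C, P C * (κ / 2 + (2 * κ)⁻¹ *
            (m C * m C - 2 * ℓ x * m C + ℓ x ^ 2 * ind {x} C)) :=
          sum_le_sum fun C _ => mul_le_mul_of_nonneg_left (hpt C) (hP0 C)
      _ = κ / 2 * ∑ C, P C + (2 * κ)⁻¹ * (∑ C, P C * (m C * m C) - 2 * ℓ x * ∑ C, P C * m C +
            ℓ x ^ 2 * ∑ C, P C * ind {x} C) := by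
          simp only [mul_sum, ← sum_add_distrib, ← sum_sub_distrib]
          exact sum_congr rfl fun C _ => by ring
      _ ≤ _ := by
          rw [hsum1, mul_one, hx1]
          refine add_le_add_right (mul_le_mul_of_nonneg_left ?_ (by positivity)) _
          have h1 := mul_le_mul_of_nonneg_left hm1 (hℓ0 x)
          have hq : Real.exp (-η) ≤ 1 := Real.exp_le_one_iff.2 (neg_nonpos.2 hη.le)
          have hE1 : 0 ≤ Real.exp (4 * r ^ 2 * δ * η) - 1 := by
            have := Real.one_le_exp (show 0 ≤ 4 * (r : ℝ) ^ 2 * δ * η by positivity)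
            linarith
          have h2 : ℓ x ^ 2 * Real.exp (-η) ≤ 1 :=
            mul_le_one₀ (pow_le_one₀ (hℓ0 x) (hload x)) (Real.exp_pos _).le hq
          have h3 := mul_le_mul_of_nonneg_right h2 hE1
          nlinarith
  obtain ⟨C, hC⟩ := exists_le_of_weighted_average P
    (fun C => ∑ i ∈ M C, w i +
      β * (∑ i, F₁ C i * w i - ∑ x, max (vertexLoad e (F₁ C) x - 1) 0)) hP0 hsum1
    ((Real.exp (-(η * r)) * (1 - Real.exp (-η)) + β * Real.exp (-η)) * (∑ i, F i * w i) -
          β * (Fintype.card α * (κ / 2 + (2 * κ)⁻¹ *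
            (Real.exp (4 * r ^ 2 * δ * η) - 1 + Real.exp (2 * r * η) * (r * δ))))) (by
      have h1 : ∑ C, P C * ∑ x, max (vertexLoad e (F₁ C) x - 1) 0 ≤ Fintype.card α *
          (κ / 2 + (2 * κ)⁻¹ *
          (Real.exp (4 * r ^ 2 * δ * η) - 1 + Real.exp (2 * r * η) * (r * δ))) := by
        simp only [mul_sum]
        rw [sum_comm]
        refine (sum_le_sum fun x _ => hEX x).trans ?_
        rw [sum_const, nsmul_eq_mul, card_univ]
      have h2 : ∑ C, P C * (∑ i ∈ M C, w i +
          β * (∑ i, F₁ C i * w i - ∑ x, max (vertexLoad e (F₁ C) x - 1) 0)) =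
          ∑ C, P C * ∑ i ∈ M C, w i + β * (∑ C, P C * ∑ i, F₁ C i * w i -
            ∑ C, P C * ∑ x, max (vertexLoad e (F₁ C) x - 1) 0) := by
        rw [← sum_sub_distrib, mul_sum, ← sum_add_distrib]
        exact sum_congr rfl fun C _ => by ring
      rw [h2]
      have h3 := mul_le_mul_of_nonneg_left h1 hβ
      have h4 := mul_le_mul_of_nonneg_left hEF hβ
      calc _ = Real.exp (-(η * r)) * (1 - Real.exp (-η)) * (∑ i, F i * w i) +
            β * (Real.exp (-η) * ∑ i, F i * w i) - β * (Fintype.card α * (κ / 2 + (2 * κ)⁻¹ *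
            (Real.exp (4 * r ^ 2 * δ * η) - 1 + Real.exp (2 * r * η) * (r * δ)))) := by ring
        _ ≤ _ := by rw [mul_sub]; linarith)
  refine ⟨M C, F₁ C, fun i hi => (mem_filter.1 hi).2.1, ?_, hF₁0 C, ?_, ?_, hC⟩
  · intro i hi j hj hij
    by_contra hd
    have hi' := (mem_filter.1 hi).2.2
    have hj' := (mem_filter.1 hj).2.2
    refine disjoint_left.1 hi'.2 hj'.1 ?_
    simp [hblk, hij.symm, disjoint_comm, hd]
  · intro i hi
    have hF0 : F i ≠ 0 := fun h => hi (by simp [hF₁, h])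
    have hi0 : Disjoint C (blk (e i)) := by
      by_contra h
      exact hi (by simp [hF₁, hind, h])
    refine ⟨hF0, fun j hj => ?_⟩
    by_contra hd
    refine disjoint_left.1 hi0 (mem_filter.1 hj).2.2.1 ?_
    simp [hblk, disjoint_comm, hd]
  · intro i
    have h1 : g i ≤ Real.exp (η * r) := by
      rw [hg, Real.exp_le_exp]
      refine mul_le_mul_of_nonneg_left ?_ hη.le
      have : ((e i).card : ℝ) ≤ r := by exact_mod_cast hr i
      linarith
    calc F₁ C i ≤ F i * g i := mul_le_of_le_one_right
          (mul_nonneg (hF i) (Real.exp_pos _).le) (hind1 _ _)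
      _ ≤ _ := mul_le_mul_of_nonneg_left h1 (hF i)

lemma nibble_rounds (r : ℕ) {η : ℝ} (hη : 0 < η) (L : ℕ) : ∀ ε : ℝ, 0 < ε → ∃ δ : ℝ, 0 < δ ∧
    ∀ (ι α : Type) [Fintype ι] [Fintype α] [DecidableEq ι] [DecidableEq α]
      (e : ι → Finset α) (F w : ι → ℝ), (∀ i, 0 ≤ F i) → (∀ i, (e i).Nonempty) →
      (∀ i, (e i).card ≤ r) → (∀ i, 0 ≤ w i) → (∀ i, w i ≤ 1) → (∀ x, vertexLoad e F x ≤ 1) →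
      (∀ x y, x ≠ y → (∑ i, if x ∈ e i ∧ y ∈ e i then F i else 0) ≤ δ) →
      ∃ M : Finset ι, (∀ i ∈ M, F i ≠ 0) ∧
        (∀ i ∈ M, ∀ j ∈ M, i ≠ j → Disjoint (e i) (e j)) ∧
        Real.exp (-(η * r)) * (1 - Real.exp (-η) ^ L) * (∑ i, F i * w i) -
          ε * Fintype.card α ≤ ∑ i ∈ M, w i := by
  induction L with
  | zero =>
    intro ε hε
    refine ⟨1, one_pos, fun ι α _ _ _ _ e F w _ _ _ _ _ _ _ => ⟨∅, by simp, by simp, ?_⟩⟩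
    simp
    positivity
  | succ L ih =>
    intro ε hε
    obtain ⟨δ', hδ', ih⟩ := ih (ε / 2) (by linarith)
    obtain ⟨δ, hδ, hδ1, hδ2⟩ : ∃ δ : ℝ, 0 < δ ∧ δ * Real.exp (η * r) ≤ δ' ∧
        (2 * (ε / 2))⁻¹ * (Real.exp (4 * r ^ 2 * δ * η) - 1 +
          Real.exp (2 * r * η) * (r * δ)) ≤ ε / 4 := by
      have c1 : Filter.Tendsto (fun δ : ℝ => δ * Real.exp (η * r)) (nhdsWithin 0 (Set.Ioi 0))
          (nhds (0 * Real.exp (η * r))) :=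
        (Continuous.tendsto (by fun_prop) 0).mono_left nhdsWithin_le_nhds
      have c2 : Filter.Tendsto (fun δ : ℝ => (2 * (ε / 2))⁻¹ *
          (Real.exp (4 * r ^ 2 * δ * η) - 1 + Real.exp (2 * r * η) * (r * δ)))
          (nhdsWithin 0 (Set.Ioi 0)) (nhds ((2 * (ε / 2))⁻¹ *
          (Real.exp (4 * r ^ 2 * 0 * η) - 1 + Real.exp (2 * r * η) * (r * 0)))) :=
        (Continuous.tendsto (by fun_prop) 0).mono_left nhdsWithin_le_nhds
      have e1 := c1.eventually_le_const (u := δ') (by simpa using hδ')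
      have e2 := c2.eventually_le_const (u := ε / 4) (by simp; positivity)
      obtain ⟨δ, h, h'⟩ := ((e1.and e2).and self_mem_nhdsWithin).exists
      exact ⟨δ, h', h.1, h.2⟩
    refine ⟨δ, hδ, fun ι α _ _ _ _ e F w hF hne hr hw0 hw1 hload hcod => ?_⟩
    set β := Real.exp (-(η * r)) * (1 - Real.exp (-η) ^ L) with hβ
    have hq1 : Real.exp (-η) ≤ 1 := Real.exp_le_one_iff.2 (neg_nonpos.2 hη.le)
    have hqL : Real.exp (-η) ^ L ≤ 1 := pow_le_one₀ (Real.exp_pos _).le hq1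
    have hβ0 : 0 ≤ β := mul_nonneg (Real.exp_pos _).le (by linarith)
    have hβ1 : β ≤ 1 := mul_le_one₀
      (Real.exp_le_one_iff.2 (neg_nonpos.2 (by positivity))) (by linarith)
      (by linarith [pow_nonneg (Real.exp_pos (-η)).le L])
    obtain ⟨M, F₁, hMF, hMd, hF₁0, hF₁M, hF₁le, hval⟩ := nibble_step e F w hF hne hr hw0 hload hδ.le
      hcod hη (half_pos hε) hβ0
    obtain ⟨F', hF'0, hF'le, hF'load, hF'loss⟩ := exists_le_load_le_one e F₁ hF₁0
    obtain ⟨M', hM'F, hM'd, hM'val⟩ := ih ι α e F' w hF'0 hne hr hw0 hw1 hF'load (by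
      intro x y hxy
      refine le_trans ?_ ((mul_le_mul_of_nonneg_right (hcod x y hxy) (Real.exp_pos _).le).trans hδ1)
      rw [sum_mul]
      refine sum_le_sum fun i _ => ?_
      split_ifs
      · exact (hF'le i).trans (hF₁le i)
      · simp)
    have hF'F₁ : ∀ i, F' i ≠ 0 → F₁ i ≠ 0 := fun i hi h =>
      hi (le_antisymm (h ▸ hF'le i) (hF'0 i))
    have hdis : Disjoint M M' := by
      rw [disjoint_left]
      intro i hi hi'
      have := (hF₁M i (hF'F₁ i (hM'F i hi'))).2 i hi
      exact (hne i).ne_empty (disjoint_self.1 this)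
    refine ⟨M ∪ M', ?_, ?_, ?_⟩
    · intro i hi
      rcases mem_union.1 hi with h | h
      · exact hMF i h
      · exact (hF₁M i (hF'F₁ i (hM'F i h))).1
    · intro i hi j hj hij
      rcases mem_union.1 hi with h | h <;> rcases mem_union.1 hj with h' | h'
      · exact hMd i h j h' hij
      · exact ((hF₁M j (hF'F₁ j (hM'F j h'))).2 i h).symm
      · exact (hF₁M i (hF'F₁ i (hM'F i h))).2 j h'
      · exact hM'd i h j h' hij
    · rw [sum_union hdis]
      have h1 : ∑ i, F₁ i * w i - ∑ x, max (vertexLoad e F₁ x - 1) 0 ≤ ∑ i, F' i * w i := by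
        have : ∑ i, F₁ i * w i - ∑ i, F' i * w i ≤ ∑ i, (F₁ i - F' i) := by
          rw [← sum_sub_distrib]
          refine sum_le_sum fun i _ => ?_
          nlinarith [hF'le i, hw1 i]
        linarith
      have h2 := mul_le_mul_of_nonneg_left h1 hβ0
      set σ := (2 * (ε / 2))⁻¹ * (Real.exp (4 * r ^ 2 * δ * η) - 1 +
          Real.exp (2 * r * η) * (r * δ)) with hσ
      have hN : (0 : ℝ) ≤ Fintype.card α := Nat.cast_nonneg _
      have h3 : β * (Fintype.card α * (ε / 2 / 2 + σ)) ≤ Fintype.card α * (ε / 2) := by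
        have h4 : Fintype.card α * (ε / 2 / 2 + σ) ≤ Fintype.card α * (ε / 2) :=
          mul_le_mul_of_nonneg_left (by linarith) hN
        exact (mul_le_mul_of_nonneg_left h4 hβ0).trans (mul_le_of_le_one_left (by positivity) hβ1)
      have h5 : Real.exp (-(η * r)) * (1 - Real.exp (-η)) + β * Real.exp (-η) =
          Real.exp (-(η * r)) * (1 - Real.exp (-η) ^ (L + 1)) := by
        rw [hβ, pow_succ]
        ring
      rw [h5] at hval
      linarith

/-- **Fractional versus integer matchings.** A fractional matching of a hypergraph with bounded
edges and small weighted codegrees can be rounded with a loss that is small compared with the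
number of vertices. -/
theorem exists_matching_of_small_codegree (r : ℕ) (ε : ℝ) (hε : 0 < ε) : ∃ δ : ℝ, 0 < δ ∧
    ∀ (ι α : Type) [Fintype ι] [Fintype α] [DecidableEq ι] [DecidableEq α]
      (e : ι → Finset α) (F w : ι → ℝ), (∀ i, 0 ≤ F i) → (∀ i, (e i).Nonempty) →
      (∀ i, (e i).card ≤ r) → (∀ i, 0 ≤ w i) → (∀ i, w i ≤ 1) → (∀ x, vertexLoad e F x ≤ 1) →
      (∀ x y, x ≠ y → (∑ i, if x ∈ e i ∧ y ∈ e i then F i else 0) ≤ δ) →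
      ∃ M : Finset ι, (∀ i ∈ M, F i ≠ 0) ∧
        (∀ i ∈ M, ∀ j ∈ M, i ≠ j → Disjoint (e i) (e j)) ∧
        ∑ i, F i * w i - ε * Fintype.card α ≤ ∑ i ∈ M, w i := by
  set η := ε / (4 * (r + 1)) with hη
  have hη0 : 0 < η := by positivity
  have hq : Real.exp (-η) < 1 := by simpa using hη0
  obtain ⟨L, hL⟩ := exists_pow_lt_of_lt_one (show 0 < ε / 4 by linarith) hq
  obtain ⟨δ, hδ, h⟩ := nibble_rounds r hη0 L (ε / 2) (by linarith)
  refine ⟨δ, hδ, fun ι α _ _ _ _ e F w hF hne hr hw0 hw1 hload hcod => ?_⟩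
  obtain ⟨M, hM, hMd, hval⟩ := h ι α e F w hF hne hr hw0 hw1 hload hcod
  refine ⟨M, hM, hMd, le_trans ?_ hval⟩
  have h1 : ∑ i, F i * w i ≤ Fintype.card α := by
    calc ∑ i, F i * w i ≤ ∑ i, ((e i ∩ univ).card : ℝ) * F i := by
          refine sum_le_sum fun i _ => ?_
          rw [inter_univ]
          have : (1 : ℝ) ≤ (e i).card := by exact_mod_cast (hne i).card_pos
          nlinarith [hF i, hw1 i]
      _ = ∑ x, vertexLoad e F x := (sum_vertexLoad e F univ).symm
      _ ≤ ∑ _x : α, (1 : ℝ) := sum_le_sum fun x _ => hload x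
      _ = _ := by simp
  have h0 : 0 ≤ ∑ i, F i * w i := sum_nonneg fun i _ => mul_nonneg (hF i) (hw0 i)
  have h2 : 1 - ε / 4 ≤ Real.exp (-(η * r)) := by
    have h3 := Real.add_one_le_exp (-(η * r))
    have h4 : η * r ≤ ε / 4 := by
      rw [hη, div_mul_eq_mul_div, div_le_div_iff₀ (by positivity) (by norm_num)]
      nlinarith
    linarith
  have h3 : 1 - ε / 2 ≤ Real.exp (-(η * r)) * (1 - Real.exp (-η) ^ L) := by
    have h4 : Real.exp (-(η * r)) ≤ 1 := Real.exp_le_one_iff.2 (neg_nonpos.2 (by positivity))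
    have h5 : 0 < Real.exp (-η) ^ L := pow_pos (Real.exp_pos _) _
    nlinarith
  have h4 := mul_le_mul_of_nonneg_right h3 h0
  nlinarith

lemma abs_card_interedges_sub_le {α : Type*} [DecidableEq α] {G : SimpleGraph α} {ε : ℝ}
    {s t A B : Finset α}
    (h : G.IsUniform ε s t) (hA : A ⊆ s) (hB : B ⊆ t) :
    |(#(G.interedges A B) : ℝ) - G.edgeDensity s t * (#A * #B)| ≤ ε * (#s * #t) := by
  have hε := h.pos
  have hAs : (#A : ℝ) ≤ #s := by exact_mod_cast card_le_card hA
  have hBt : (#B : ℝ) ≤ #t := by exact_mod_cast card_le_card hB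
  have h0 : (0 : ℝ) ≤ #(G.interedges A B) := by positivity
  have h1 : (#(G.interedges A B) : ℝ) ≤ #A * #B := by
    exact_mod_cast G.card_interedges_le_mul A B
  have d0 : (0 : ℝ) ≤ G.edgeDensity s t := by exact_mod_cast G.edgeDensity_nonneg s t
  have d1 : (G.edgeDensity s t : ℝ) ≤ 1 := by exact_mod_cast G.edgeDensity_le_one s t
  have hAB : (0 : ℝ) ≤ #A * #B := by positivity
  have small : (#A * #B : ℝ) ≤ ε * (#s * #t) →
      |(#(G.interedges A B) : ℝ) - G.edgeDensity s t * (#A * #B)| ≤ ε * (#s * #t) := by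
    intro hs
    rw [abs_le]
    constructor <;> nlinarith
  by_cases hA' : (#s : ℝ) * ε ≤ #A
  swap
  · apply small
    push Not at hA'
    calc (#A * #B : ℝ) ≤ (#s * ε) * #t := by gcongr
      _ = _ := by ring
  by_cases hB' : (#t : ℝ) * ε ≤ #B
  swap
  · apply small
    push Not at hB'
    calc (#A * #B : ℝ) ≤ #s * (#t * ε) := by gcongr
      _ = _ := by ring
  have key := h hA hB hA' hB'
  have e : (#(G.interedges A B) : ℝ) = G.edgeDensity A B * (#A * #B) := by
    rw [SimpleGraph.edgeDensity_def]
    push_cast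
    by_cases hz : (#A * #B : ℝ) = 0
    · rw [hz]; linarith [hz ▸ h1]
    · rw [div_mul_cancel₀ _ hz]
  rw [e, ← sub_mul, abs_mul, abs_of_nonneg hAB]
  calc _ ≤ ε * (#A * #B) := by gcongr
    _ ≤ _ := by gcongr

/-- A regular partition, presented as a colouring `p` of the vertices together with the reduced
graph `R` of dense regular pairs and the densities `D`. -/
structure IsRegularColoring {n k : ℕ} (G : SimpleGraph (Fin n)) (p : Fin n → Fin k)
    (R : Fin k → Fin k → Prop) (D : Fin k → Fin k → ℝ) (d ε : ℝ) (m : ℕ) : Prop where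
  symm : ∀ i j, R i j → R j i
  ne : ∀ i j, R i j → i ≠ j
  card_ge : ∀ i, m ≤ #{v | p v = i}
  le_density : ∀ i j, R i j → d ≤ D i j
  density_le : ∀ i j, R i j → D i j ≤ 1
  regular : ∀ i j, R i j → ∀ A B : Finset (Fin n), (∀ v ∈ A, p v = i) → (∀ v ∈ B, p v = j) →
    |(#{q ∈ A ×ˢ B | G.Adj q.1 q.2} : ℝ) - D i j * (#A * #B)| ≤
      ε * (#{v | p v = i} * #{v | p v = j})

theorem exists_isRegularColoring (γ : ℝ) (hγ : 0 < γ) :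
    ∃ d : ℝ, 0 < d ∧ d ≤ 1 ∧ ∀ ε : ℝ, 0 < ε → ∀ m : ℕ, ∃ n₀ : ℕ, ∀ n : ℕ, n₀ ≤ n →
      ∀ G : SimpleGraph (Fin n), ∃ (k : ℕ) (p : Fin n → Fin k) (R : Fin k → Fin k → Prop)
        (D : Fin k → Fin k → ℝ), IsRegularColoring G p R D d ε m ∧
        (#{q : Fin n × Fin n | G.Adj q.1 q.2 ∧ ¬ R (p q.1) (p q.2)} : ℝ) ≤ γ * (n : ℝ) ^ 2 := by
  refine ⟨min 1 (γ / 16), by positivity, min_le_left _ _, fun ε hε m => ?_⟩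
  set ε' := min ε (γ / 16) with hε'
  have hε'0 : 0 < ε' := by positivity
  set l := ⌈4 / (γ / 4)⌉₊ with hl
  set b := SzemerediRegularity.bound ε' l with hb
  refine ⟨l + m * b + 1, fun n hn G => ?_⟩
  have : Nonempty (Fin n) := ⟨⟨0, by omega⟩⟩
  have hbpos : 0 < b := SzemerediRegularity.bound_pos _ _
  obtain ⟨P, hP, hPl, hPb, hPu⟩ := szemeredi_regularity (α := Fin n) G hε'0 (l := l)
    (by simp; nlinarith)
  set k := #P.parts
  let φ : P.parts ≃ Fin k := P.parts.equivFin
  let pt : Fin n → P.parts := fun v => ⟨P.part v, P.part_mem.2 (mem_univ v)⟩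
  have hcls : ∀ i : Fin k, ({v | φ (pt v) = i} : Finset (Fin n)) = (φ.symm i).1 := by
    intro i
    ext v
    simp only [mem_filter, mem_univ, true_and]
    rw [← Equiv.eq_symm_apply, Subtype.ext_iff]
    exact P.part_eq_iff_mem (φ.symm i).2
  have hcls' : ∀ (i : Fin k) v, φ (pt v) = i ↔ v ∈ (φ.symm i).1 := by
    intro i v; rw [← hcls i]; simp
  refine ⟨k, fun v => φ (pt v), fun i j => i ≠ j ∧ G.IsUniform ε' (φ.symm i).1 (φ.symm j).1 ∧
    (min 1 (γ / 16) : ℝ) ≤ G.edgeDensity (φ.symm i).1 (φ.symm j).1,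
    fun i j => G.edgeDensity (φ.symm i).1 (φ.symm j).1, ⟨?_, ?_, ?_, ?_, ?_, ?_⟩, ?_⟩
  · rintro i j ⟨h1, h2, h3⟩
    exact ⟨h1.symm, h2.symm, by rwa [G.edgeDensity_comm]⟩
  · exact fun i j h => h.1
  · intro i
    rw [hcls]
    have h1 := hP.average_le_card_part (φ.symm i).2
    refine le_trans ?_ h1
    have hk : 0 < k := i.pos
    rw [Nat.le_div_iff_mul_le hk]
    simp only [card_univ, Fintype.card_fin]
    calc m * k ≤ m * b := Nat.mul_le_mul_left _ hPb
      _ ≤ n := by omega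
  · exact fun i j h => h.2.2
  · intro i j _
    exact_mod_cast G.edgeDensity_le_one _ _
  · rintro i j ⟨h1, h2, h3⟩ A B hA hB
    rw [hcls, hcls]
    have := abs_card_interedges_sub_le h2 (fun v hv => (hcls' i v).1 (hA v hv))
      (fun v hv => (hcls' j v).1 (hB v hv))
    refine le_trans (le_of_eq ?_) (this.trans ?_)
    · rfl
    · gcongr; exact min_le_left _ _
  · have hsub : ({q : Fin n × Fin n | G.Adj q.1 q.2 ∧ ¬ (φ (pt q.1) ≠ φ (pt q.2) ∧
        G.IsUniform ε' (φ.symm (φ (pt q.1))).1 (φ.symm (φ (pt q.2))).1 ∧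
        (min 1 (γ / 16) : ℝ) ≤ G.edgeDensity (φ.symm (φ (pt q.1))).1 (φ.symm (φ (pt q.2))).1)} :
          Finset (Fin n × Fin n)) ⊆
        (P.nonUniforms G ε').biUnion (fun (U, V) ↦ U ×ˢ V) ∪ P.parts.biUnion offDiag ∪
        (P.sparsePairs G (γ / 16)).biUnion (fun (U, V) ↦ G.interedges U V) := by
      rintro ⟨x, y⟩ hq
      simp only [mem_filter, mem_univ, true_and, Equiv.symm_apply_apply] at hq
      obtain ⟨hxy, hq⟩ := hq
      have hx : x ∈ (pt x).1 := P.mem_part (mem_univ x)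
      have hy : y ∈ (pt y).1 := P.mem_part (mem_univ y)
      simp only [mem_union, mem_biUnion]
      by_cases hUV : pt x = pt y
      · exact Or.inl (Or.inr ⟨(pt x).1, (pt x).2, mem_offDiag.2 ⟨hx, hUV ▸ hy, hxy.ne⟩⟩)
      have hUV' : (pt x).1 ≠ (pt y).1 := fun h => hUV (Subtype.ext h)
      by_cases hu : G.IsUniform ε' (pt x).1 (pt y).1
      · refine Or.inr ⟨((pt x).1, (pt y).1), ?_, (G.mem_interedges_iff).2 ⟨hx, hy, hxy⟩⟩
        rw [Finpartition.mk_mem_sparsePairs]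
        refine ⟨(pt x).2, (pt y).2, hUV', lt_of_not_ge fun hd => hq ⟨fun h => hUV (φ.injective h),
          hu, (min_le_right _ _).trans hd⟩⟩
      · refine Or.inl (Or.inl ⟨((pt x).1, (pt y).1), ?_, mem_product.2 ⟨hx, hy⟩⟩)
        rw [Finpartition.mk_mem_nonUniforms]
        exact ⟨(pt x).2, (pt y).2, hUV', hu⟩
    have c1 := hP.sum_nonUniforms_lt (G := G) univ_nonempty hε'0 hPu
    have c2 := hP.card_biUnion_offDiag_le (ε := γ / 4) (by positivity)
      ((Nat.le_ceil _).trans (by exact_mod_cast hPl))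
    have c3 := hP.card_interedges_sparsePairs_le (G := G) (ε := γ / 16) (by positivity)
    have hc := (card_le_card hsub).trans ((card_union_le _ _).trans
      (Nat.add_le_add_right (card_union_le _ _) _))
    have hc' := (Nat.cast_le (α := ℝ)).2 hc
    push_cast at hc'
    refine le_trans (le_of_eq (by congr!)) (hc'.trans ?_)
    simp only [card_univ, Fintype.card_fin] at c1 c2 c3
    have : ε' * (n : ℝ) ^ 2 ≤ γ / 16 * n ^ 2 := by gcongr; exact min_le_right _ _
    have : 0 ≤ γ * (n : ℝ) ^ 2 := by positivity
    linarith

/-- The choices of one vertex from every colour class. -/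
noncomputable def transversals {n k : ℕ} (p : Fin n → Fin k) : Finset (Fin k → Fin n) :=
  {x | ∀ i, p (x i) = i}

lemma mem_transversals {n k : ℕ} {p : Fin n → Fin k} {x : Fin k → Fin n} :
    x ∈ transversals p ↔ ∀ i, p (x i) = i := by
  simp [transversals]

lemma update_mem_transversals {n k : ℕ} {p : Fin n → Fin k} {x : Fin k → Fin n}
    (hx : x ∈ transversals p) {i : Fin k} {u : Fin n} (hu : p u = i) :
    Function.update x i u ∈ transversals p := by
  rw [mem_transversals] at hx ⊢
  intro j
  by_cases h : j = i
  · subst h; simpa using hu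
  · simpa [h] using hx j

lemma sum_transversals_mul_card {n k : ℕ} (p : Fin n → Fin k) (i : Fin k)
    (φ : (Fin k → Fin n) → ℝ) :
    (∑ x ∈ transversals p, φ x) * #{v | p v = i} =
      ∑ x ∈ transversals p, ∑ u with p u = i, φ (Function.update x i u) := by
  rw [sum_mul]
  simp_rw [mul_comm (φ _), ← nsmul_eq_mul, ← sum_const]
  rw [← sum_product', ← sum_product']
  refine sum_nbij' (fun z => (Function.update z.1 i z.2, z.1 i))
    (fun z => (Function.update z.1 i z.2, z.1 i)) ?_ ?_ ?_ ?_ ?_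
  all_goals
    rintro ⟨x, u⟩ h
    simp only [mem_product, mem_filter, mem_univ, true_and] at h
  · simp only [mem_product, mem_filter, mem_univ, true_and]
    exact ⟨update_mem_transversals h.1 h.2, mem_transversals.1 h.1 i⟩
  · simp only [mem_product, mem_filter, mem_univ, true_and]
    exact ⟨update_mem_transversals h.1 h.2, mem_transversals.1 h.1 i⟩
  · simp
  · simp
  · simp

namespace IsRegularColoring

variable {n k : ℕ} {G : SimpleGraph (Fin n)} {p : Fin n → Fin k} {R : Fin k → Fin k → Prop}
  {D : Fin k → Fin k → ℝ} {d ε : ℝ} {m : ℕ}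

lemma abs_card_adj_sub_le (h : IsRegularColoring G p R D d ε m) (hm : 0 < m) {i j : Fin k}
    (hij : R i j) (Q₁ Q₂ : (Fin k → Fin n) → Prop)
    (h₁ : ∀ x u, Q₁ (Function.update x i u) ↔ Q₁ x)
    (h₂ : ∀ x u, Q₂ (Function.update x j u) ↔ Q₂ x) :
    |(#{x ∈ transversals p | (Q₁ x ∧ Q₂ x) ∧ G.Adj (x i) (x j)} : ℝ) -
      D i j * #{x ∈ transversals p | Q₁ x ∧ Q₂ x}| ≤ ε * #(transversals p) := by
  have hne := h.ne i j hij
  have pos : ∀ l, (0 : ℝ) < #{v | p v = l} := fun l => by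
    exact_mod_cast hm.trans_le (h.card_ge l)
  have ex : ∀ (Q : (Fin k → Fin n) → Prop) [DecidablePred Q], (#{x ∈ transversals p | Q x} : ℝ) *
      (#{v | p v = i} * #{v | p v = j}) = ∑ x ∈ transversals p, ∑ u with p u = i,
        ∑ v with p v = j,
          if Q (Function.update (Function.update x i u) j v) then (1 : ℝ) else 0 := by
    intro Q _
    rw [card_filter, Nat.cast_sum, mul_comm (#{v | p v = i} : ℝ), ← mul_assoc,
      sum_transversals_mul_card, sum_transversals_mul_card]
    push_cast
    rfl
  have hupd : ∀ (x : Fin k → Fin n) u v, Function.update (Function.update x i u) j v =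
      Function.update (Function.update x j v) i u := fun x u v =>
    Function.update_comm hne u v x
  have key : ∀ x ∈ transversals p,
      |(∑ u with p u = i, ∑ v with p v = j,
        if (Q₁ (Function.update (Function.update x i u) j v) ∧
            Q₂ (Function.update (Function.update x i u) j v)) ∧
          G.Adj (Function.update (Function.update x i u) j v i)
            (Function.update (Function.update x i u) j v j) then (1 : ℝ) else 0) -
        D i j * ∑ u with p u = i, ∑ v with p v = j,
        if (Q₁ (Function.update (Function.update x i u) j v) ∧
            Q₂ (Function.update (Function.update x i u) j v)) then (1 : ℝ) else 0| ≤
        ε * (#{v | p v = i} * #{v | p v = j}) := by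
    intro x hx
    set A : Finset (Fin n) := {u | p u = i ∧ Q₂ (Function.update x i u)} with hA
    set B : Finset (Fin n) := {v | p v = j ∧ Q₁ (Function.update x j v)} with hB
    have e₁ : ∀ u v, Q₁ (Function.update (Function.update x i u) j v) ↔
        Q₁ (Function.update x j v) := fun u v => by rw [hupd, h₁]
    have e₂ : ∀ u v, Q₂ (Function.update (Function.update x i u) j v) ↔
        Q₂ (Function.update x i u) := fun u v => by rw [h₂]
    have := h.regular i j hij A B (by simp [hA]; tauto) (by simp [hB]; tauto)
    refine le_trans (le_of_eq ?_) this
    congr 2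
    · rw [card_filter, sum_product, hA, hB]
      simp only [e₁, e₂, Function.update_self, Function.update_of_ne hne]
      push_cast
      simp only [sum_filter]
      refine sum_congr rfl fun u _ => ?_
      by_cases hu : p u = i <;> by_cases hq : Q₂ (Function.update x i u) <;>
        simp [hu, hq, ite_and]
    · congr 1
      rw [← Nat.cast_mul, ← card_product]
      have : A ×ˢ B = {q ∈ A ×ˢ B | True} := by simp
      rw [this, card_filter, sum_product, hA, hB]
      simp only [e₁, e₂]
      push_cast
      simp only [sum_filter]
      refine sum_congr rfl fun u _ => ?_
      by_cases hu : p u = i <;> by_cases hq : Q₂ (Function.update x i u) <;>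
        simp [hu, hq, ite_and]
  have hp : (0 : ℝ) < #{v | p v = i} * #{v | p v = j} := mul_pos (pos i) (pos j)
  refine le_of_mul_le_mul_right ?_ hp
  rw [← abs_of_pos hp, ← abs_mul, abs_of_pos hp, sub_mul, mul_assoc, ex, ex, mul_sum,
    ← sum_sub_distrib]
  refine (abs_sum_le_sum_abs _ _).trans ((sum_le_sum key).trans (le_of_eq ?_))
  simp; ring

lemma abs_card_forall_adj_sub_le (h : IsRegularColoring G p R D d ε m) (hm : 0 < m) (hd : 0 ≤ d)
    {J : Finset (Fin k)} (B : (Fin k → Fin n) → Prop)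
    (hB : ∀ x y, (∀ i ∈ J, x i = y i) → (B x ↔ B y)) (S : Finset (Fin k × Fin k))
    (hS : ∀ e ∈ S, e.1 < e.2 ∧ R e.1 e.2 ∧ ¬ (e.1 ∈ J ∧ e.2 ∈ J)) :
    |(#{x ∈ transversals p | B x ∧ ∀ e ∈ S, G.Adj (x e.1) (x e.2)} : ℝ) -
      (∏ e ∈ S, D e.1 e.2) * #{x ∈ transversals p | B x}| ≤ #S * ε * #(transversals p) := by
  induction S using Finset.induction_on with
  | empty => simp
  | insert e S heS ih =>
    have ih := ih fun f hf => hS f (mem_insert_of_mem hf)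
    obtain ⟨he, hR, heJ⟩ := hS e (mem_insert_self _ _)
    have hBu : ∀ x u l, l ∉ J → (B (Function.update x l u) ↔ B x) := by
      intro x u l hl
      apply hB
      intro i hi
      rw [Function.update_of_ne]
      rintro rfl; exact hl hi
    have inv : ∀ l : Fin k, ∀ x u, (((l ∉ J → B (Function.update x l u)) ∧
        ∀ f ∈ S, f.1 ≠ l → f.2 ≠ l →
          G.Adj (Function.update x l u f.1) (Function.update x l u f.2)) ↔
        ((l ∉ J → B x) ∧ ∀ f ∈ S, f.1 ≠ l → f.2 ≠ l → G.Adj (x f.1) (x f.2))) := by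
      intro l x u
      refine and_congr (forall_congr' fun hl => hBu x u l hl) ?_
      refine forall_congr' fun f => forall_congr' fun _ => forall_congr' fun h1 =>
        forall_congr' fun h2 => ?_
      rw [Function.update_of_ne h1, Function.update_of_ne h2]
    have dec := h.abs_card_adj_sub_le hm hR
      (fun x => (e.1 ∉ J → B x) ∧ ∀ f ∈ S, f.1 ≠ e.1 → f.2 ≠ e.1 → G.Adj (x f.1) (x f.2))
      (fun x => (e.2 ∉ J → B x) ∧ ∀ f ∈ S, f.1 ≠ e.2 → f.2 ≠ e.2 → G.Adj (x f.1) (x f.2))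
      (inv e.1) (inv e.2)
    have hQ : ∀ x, (((e.1 ∉ J → B x) ∧ ∀ f ∈ S, f.1 ≠ e.1 → f.2 ≠ e.1 → G.Adj (x f.1) (x f.2)) ∧
        ((e.2 ∉ J → B x) ∧ ∀ f ∈ S, f.1 ≠ e.2 → f.2 ≠ e.2 → G.Adj (x f.1) (x f.2))) ↔
        (B x ∧ ∀ f ∈ S, G.Adj (x f.1) (x f.2)) := by
      intro x
      constructor
      · rintro ⟨⟨b1, a1⟩, b2, a2⟩
        refine ⟨by tauto, fun f hf => ?_⟩
        by_cases c1 : f.1 ≠ e.1 ∧ f.2 ≠ e.1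
        · exact a1 f hf c1.1 c1.2
        · have hfe : f ≠ e := by rintro rfl; exact heS hf
          have hlt := (hS f (mem_insert_of_mem hf)).1
          have : ¬ (f.1 = e.1 ∧ f.2 = e.2) := fun ⟨h1, h2⟩ => hfe (Prod.ext h1 h2)
          refine a2 f hf ?_ ?_
          · intro h1
            rcases not_and_or.1 c1 with h2 | h2 <;> push Not at h2
            · rw [h1] at h2; exact he.ne' h2
            · rw [h1, h2] at hlt; exact absurd hlt he.asymm
          · intro h1
            rcases not_and_or.1 c1 with h2 | h2 <;> push Not at h2
            · exact this ⟨h2, h1⟩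
            · rw [h1] at h2; exact he.ne' h2
      · rintro ⟨b, a⟩
        exact ⟨⟨fun _ => b, fun f hf _ _ => a f hf⟩, fun _ => b, fun f hf _ _ => a f hf⟩
    simp only [hQ] at dec
    have e1 : ∀ x, (B x ∧ ∀ f ∈ insert e S, G.Adj (x f.1) (x f.2)) ↔
        ((B x ∧ ∀ f ∈ S, G.Adj (x f.1) (x f.2)) ∧ G.Adj (x e.1) (x e.2)) := by
      intro x; rw [forall_mem_insert]; tauto
    simp only [e1]
    rw [prod_insert heS, card_insert_of_notMem heS]
    have D0 : 0 ≤ D e.1 e.2 := hd.trans (h.le_density _ _ hR)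
    have D1 := h.density_le _ _ hR
    push_cast
    set a : ℝ := (#{x ∈ transversals p | (B x ∧ ∀ f ∈ S, G.Adj (x f.1) (x f.2)) ∧
      G.Adj (x e.1) (x e.2)} : ℝ)
    set b : ℝ := (#{x ∈ transversals p | B x ∧ ∀ f ∈ S, G.Adj (x f.1) (x f.2)} : ℝ)
    set c : ℝ := (#{x ∈ transversals p | B x} : ℝ)
    calc |a - D e.1 e.2 * (∏ f ∈ S, D f.1 f.2) * c|
        = |(a - D e.1 e.2 * b) + D e.1 e.2 * (b - (∏ f ∈ S, D f.1 f.2) * c)| := by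
          congr 1; ring
      _ ≤ |a - D e.1 e.2 * b| + |D e.1 e.2 * (b - (∏ f ∈ S, D f.1 f.2) * c)| := abs_add_le _ _
      _ ≤ ε * #(transversals p) + 1 * (#S * ε * #(transversals p)) := by
          rw [abs_mul, abs_of_nonneg D0]
          gcongr
      _ = _ := by ring

end IsRegularColoring

/-- The transversals whose restriction to the colours in `I` is pairwise adjacent. -/
noncomputable def cliqueTransversals {n k : ℕ} (G : SimpleGraph (Fin n)) (p : Fin n → Fin k)
    (I : Finset (Fin k)) : Finset (Fin k → Fin n) :=
  {x ∈ transversals p | ∀ i ∈ I, ∀ j ∈ I, i ≠ j → G.Adj (x i) (x j)}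

namespace IsRegularColoring

variable {n k : ℕ} {G : SimpleGraph (Fin n)} {p : Fin n → Fin k} {R : Fin k → Fin k → Prop}
  {D : Fin k → Fin k → ℝ} {d ε : ℝ} {m : ℕ}

lemma abs_card_cliqueTransversals_sub_le (h : IsRegularColoring G p R D d ε m) (hm : 0 < m)
    (hd : 0 < d) (hd1 : d ≤ 1) (hε : 0 ≤ ε) {s : ℕ} {I J : Finset (Fin k)} (hIs : #I ≤ s)
    (hJI : J ⊆ I) (hI : ∀ i ∈ I, ∀ j ∈ I, i ≠ j → R i j) :
    ∃ q : ℝ, d ^ (s * s) ≤ q ∧ ∀ B : (Fin k → Fin n) → Prop,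
      (∀ x y, (∀ i ∈ J, x i = y i) → (B x ↔ B y)) →
      |(#{x ∈ cliqueTransversals G p I | B x} : ℝ) -
        q * #{x ∈ cliqueTransversals G p J | B x}| ≤ (s * s : ℕ) * ε * #(transversals p) := by
  set S : Finset (Fin k × Fin k) := {e ∈ I ×ˢ I | e.1 < e.2 ∧ ¬ (e.1 ∈ J ∧ e.2 ∈ J)} with hSdef
  have hSc : #S ≤ s * s := (card_filter_le _ _).trans (by
    rw [card_product]; exact Nat.mul_le_mul hIs hIs)
  have hS : ∀ e ∈ S, e.1 < e.2 ∧ R e.1 e.2 ∧ ¬ (e.1 ∈ J ∧ e.2 ∈ J) := by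
    intro e he
    simp only [hSdef, mem_filter, mem_product] at he
    exact ⟨he.2.1, hI _ he.1.1 _ he.1.2 he.2.1.ne, he.2.2⟩
  refine ⟨∏ e ∈ S, D e.1 e.2, ?_, fun B hB => ?_⟩
  · calc d ^ (s * s) ≤ d ^ #S := pow_le_pow_of_le_one hd.le hd1 hSc
      _ = ∏ e ∈ S, d := by simp
      _ ≤ _ := prod_le_prod (fun _ _ => hd.le) fun e he => h.le_density _ _ (hS e he).2.1
  · have := h.abs_card_forall_adj_sub_le hm hd.le
      (B := fun x => B x ∧ ∀ i ∈ J, ∀ j ∈ J, i ≠ j → G.Adj (x i) (x j)) (J := J) (by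
        intro x y hxy
        refine and_congr (hB x y hxy) ?_
        refine forall_congr' fun i => forall_congr' fun hi => forall_congr' fun j =>
          forall_congr' fun hj => ?_
        rw [hxy i hi, hxy j hj]) S hS
    have e1 : ({x ∈ transversals p | (B x ∧ ∀ i ∈ J, ∀ j ∈ J, i ≠ j → G.Adj (x i) (x j)) ∧
        ∀ e ∈ S, G.Adj (x e.1) (x e.2)} : Finset _) = {x ∈ cliqueTransversals G p I | B x} := by
      ext x
      simp only [cliqueTransversals, mem_filter, hSdef, mem_product]
      constructor
      · rintro ⟨hx, ⟨hb, hJ⟩, hS⟩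
        refine ⟨⟨hx, fun i hi j hj hij => ?_⟩, hb⟩
        by_cases hJ' : i ∈ J ∧ j ∈ J
        · exact hJ i hJ'.1 j hJ'.2 hij
        · rcases lt_or_gt_of_ne hij with hlt | hlt
          · exact hS (i, j) ⟨⟨hi, hj⟩, hlt, hJ'⟩
          · exact (hS (j, i) ⟨⟨hj, hi⟩, hlt, fun h => hJ' h.symm⟩).symm
      · rintro ⟨⟨hx, hI⟩, hb⟩
        exact ⟨hx, ⟨hb, fun i hi j hj => hI i (hJI hi) j (hJI hj)⟩,
          fun e he => hI _ he.1.1 _ he.1.2 he.2.1.ne⟩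
    have e2 : ({x ∈ transversals p | B x ∧ ∀ i ∈ J, ∀ j ∈ J, i ≠ j → G.Adj (x i) (x j)} :
        Finset _) = {x ∈ cliqueTransversals G p J | B x} := by
      ext x
      simp only [cliqueTransversals, mem_filter]
      tauto
    refine le_trans (le_of_eq ?_) (this.trans ?_)
    · rw [← e1, ← e2]; congr!
    · gcongr

/-- Many transversals span a clique on the colours in `I`. -/
lemma le_card_cliqueTransversals (h : IsRegularColoring G p R D d ε m) (hm : 0 < m)
    (hd : 0 < d) (hd1 : d ≤ 1) (hε : 0 ≤ ε) {s : ℕ} {I : Finset (Fin k)} (hIs : #I ≤ s)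
    (hI : ∀ i ∈ I, ∀ j ∈ I, i ≠ j → R i j) :
    (d ^ (s * s) - (s * s : ℕ) * ε) * #(transversals p) ≤ #(cliqueTransversals G p I) := by
  obtain ⟨q, hq, H⟩ := h.abs_card_cliqueTransversals_sub_le hm hd hd1 hε hIs
    (J := ∅) (by simp) hI
  have := H (fun _ => True) (by simp)
  have e0 : cliqueTransversals G p ∅ = transversals p := by simp [cliqueTransversals]
  rw [e0] at this
  simp only [filter_true] at this
  have := (abs_le.1 this).1
  have : d ^ (s * s) * #(transversals p) ≤ q * #(transversals p) := by gcongr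
  linarith

/-- An event on the colours in `J` is not much likelier among transversals that span a clique on
`I` than among those that span a clique on `J`. -/
lemma card_filter_cliqueTransversals_le (h : IsRegularColoring G p R D d ε m) (hm : 0 < m)
    (hd : 0 < d) (hd1 : d ≤ 1) (hε : 0 ≤ ε) {s : ℕ} {I J : Finset (Fin k)} (hIs : #I ≤ s)
    (hJI : J ⊆ I) (hI : ∀ i ∈ I, ∀ j ∈ I, i ≠ j → R i j) (B : (Fin k → Fin n) → Prop)
    (hB : ∀ x y, (∀ i ∈ J, x i = y i) → (B x ↔ B y)) :
    (#{x ∈ cliqueTransversals G p I | B x} : ℝ) * #(cliqueTransversals G p J) ≤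
      #{x ∈ cliqueTransversals G p J | B x} * #(cliqueTransversals G p I) +
        2 * ((s * s : ℕ) * ε * #(transversals p)) * #(cliqueTransversals G p J) := by
  obtain ⟨q, hq, H⟩ := h.abs_card_cliqueTransversals_sub_le hm hd hd1 hε hIs hJI hI
  have h1 := (abs_le.1 (H B hB)).2
  have h2 := (abs_le.1 (H (fun _ => True) (by simp))).1
  simp only [filter_true] at h2
  have h3 : (#{x ∈ cliqueTransversals G p J | B x} : ℝ) ≤ #(cliqueTransversals G p J) := by
    exact_mod_cast card_filter_le _ _
  set err : ℝ := (s * s : ℕ) * ε * #(transversals p)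
  have herr : 0 ≤ err := by positivity
  set a : ℝ := (#{x ∈ cliqueTransversals G p I | B x} : ℝ)
  set b : ℝ := (#{x ∈ cliqueTransversals G p J | B x} : ℝ)
  set c : ℝ := (#(cliqueTransversals G p J) : ℝ)
  set e : ℝ := (#(cliqueTransversals G p I) : ℝ)
  have hb : 0 ≤ b := by positivity
  have hc : 0 ≤ c := by positivity
  calc a * c ≤ (q * b + err) * c := by gcongr; linarith
    _ = b * (q * c) + err * c := by ring
    _ ≤ b * (e + err) + err * c := by gcongr; linarith
    _ ≤ _ := by nlinarith

end IsRegularColoring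

/-- The total weight that `g` puts on sets with colour pattern `I`. -/
noncomputable def patternWeight {n k : ℕ} (p : Fin n → Fin k) (g : Finset (Fin n) → ℝ)
    (I : Finset (Fin k)) : ℝ :=
  ∑ K with K.image p = I, g K

/-- Redistribute the weight of every colour pattern uniformly among the transversals that span a
clique on it. -/
noncomputable def spread {n k : ℕ} (G : SimpleGraph (Fin n)) (p : Fin n → Fin k)
    (g : Finset (Fin n) → ℝ) (K : Finset (Fin n)) : ℝ :=
  ∑ I, patternWeight p g I *
    ((#{x ∈ cliqueTransversals G p I | I.image x = K} : ℝ) / #(cliqueTransversals G p I))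

/-- The cliques that meet each colour class in `J` exactly once and no other class. -/
noncomputable def colorfulCliques {n k : ℕ} (G : SimpleGraph (Fin n)) (p : Fin n → Fin k)
    (J : Finset (Fin k)) : Finset (Finset (Fin n)) :=
  {T | #T = #J ∧ T.image p = J ∧ G.IsClique (T : Set (Fin n))}

/-- The number of ways to choose vertices from the colour classes outside `J`. -/
noncomputable def freeChoices {n k : ℕ} (p : Fin n → Fin k) (J : Finset (Fin k)) : ℕ :=
  ∏ i, if i ∈ J then 1 else #{v | p v = i}

section Spread

variable {n k : ℕ} {G : SimpleGraph (Fin n)} {p : Fin n → Fin k} {g : Finset (Fin n) → ℝ}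

lemma patternWeight_nonneg (hg : ∀ K, 0 ≤ g K) (I : Finset (Fin k)) : 0 ≤ patternWeight p g I :=
  sum_nonneg fun _ _ => hg _

lemma exists_of_patternWeight_ne_zero {I : Finset (Fin k)} (h : patternWeight p g I ≠ 0) :
    ∃ K, K.image p = I ∧ g K ≠ 0 := by
  obtain ⟨K, hK, h⟩ := exists_ne_zero_of_sum_ne_zero h
  exact ⟨K, by simpa using hK, h⟩

lemma spread_nonneg (hg : ∀ K, 0 ≤ g K) (K : Finset (Fin n)) : 0 ≤ spread G p g K :=
  sum_nonneg fun I _ => mul_nonneg (patternWeight_nonneg hg I) (by positivity)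

lemma card_image_transversal {x : Fin k → Fin n} (hx : x ∈ transversals p) (I : Finset (Fin k)) :
    #(I.image x) = #I :=
  card_image_of_injective _
    (Function.LeftInverse.injective (g := p) (mem_transversals.1 hx))

lemma subset_image_transversal_iff {x : Fin k → Fin n} (hx : x ∈ transversals p)
    {I : Finset (Fin k)} {U : Finset (Fin n)} :
    U ⊆ I.image x ↔ ∀ u ∈ U, p u ∈ I ∧ x (p u) = u := by
  rw [mem_transversals] at hx
  constructor
  · intro h u hu
    obtain ⟨i, hi, rfl⟩ := mem_image.1 (h hu)
    rw [hx i]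
    exact ⟨hi, rfl⟩
  · intro h u hu
    exact mem_image.2 ⟨p u, (h u hu).1, (h u hu).2⟩

lemma exists_of_spread_ne_zero {K : Finset (Fin n)} (h : spread G p g K ≠ 0) :
    G.IsClique (K : Set (Fin n)) ∧ Set.InjOn p K ∧ ∃ I, patternWeight p g I ≠ 0 ∧ #K = #I := by
  obtain ⟨I, -, h⟩ := exists_ne_zero_of_sum_ne_zero h
  have h1 := left_ne_zero_of_mul h
  have h2 := right_ne_zero_of_mul h
  have h3 : #{x ∈ cliqueTransversals G p I | I.image x = K} ≠ 0 := by
    intro h0; apply h2; rw [h0]; simp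
  obtain ⟨x, hx⟩ := card_ne_zero.1 h3
  simp only [cliqueTransversals, mem_filter] at hx
  obtain ⟨⟨hx, hadj⟩, rfl⟩ := hx
  refine ⟨?_, ?_, I, h1, card_image_transversal hx I⟩
  · intro a ha b hb hab
    obtain ⟨i, hi, rfl⟩ := mem_image.1 (mem_coe.1 ha)
    obtain ⟨j, hj, rfl⟩ := mem_image.1 (mem_coe.1 hb)
    exact hadj i hi j hj (fun h => hab (by rw [h]))
  · intro a ha b hb hab
    obtain ⟨i, hi, rfl⟩ := mem_image.1 (mem_coe.1 ha)
    obtain ⟨j, hj, rfl⟩ := mem_image.1 (mem_coe.1 hb)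
    rw [mem_transversals] at hx
    rw [hx, hx] at hab
    rw [hab]

lemma sum_spread_mul (φ : Finset (Fin n) → ℝ) :
    ∑ K, spread G p g K * φ K = ∑ I, patternWeight p g I *
      ((∑ x ∈ cliqueTransversals G p I, φ (I.image x)) / #(cliqueTransversals G p I)) := by
  simp only [spread, sum_mul]
  rw [sum_comm]
  refine sum_congr rfl fun I _ => ?_
  simp only [mul_assoc]
  rw [← mul_sum]
  congr 1
  rw [sum_div, ← sum_fiberwise (cliqueTransversals G p I) (fun x => I.image x)]
  refine sum_congr rfl fun K _ => ?_
  rw [sum_congr rfl (g := fun _ => φ K / #(cliqueTransversals G p I))]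
  · simp; ring
  · intro x hx
    rw [(mem_filter.1 hx).2]

lemma sum_patternWeight (P : Finset (Fin k) → Prop) [DecidablePred P] (φ : Finset (Fin k) → ℝ) :
    ∑ I with P I, patternWeight p g I * φ I = ∑ K with P (K.image p), g K * φ (K.image p) := by
  rw [← sum_fiberwise ({K | P (K.image p)} : Finset (Finset (Fin n))) (fun K => K.image p),
    sum_filter]
  refine sum_congr rfl fun I _ => ?_
  split_ifs with hI
  · rw [patternWeight, sum_mul, filter_filter]
    refine sum_congr (filter_congr fun K _ => ⟨fun h => ⟨h ▸ hI, h⟩, fun h => h.2⟩) ?_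
    intro K hK
    rw [(mem_filter.1 hK).2.2]
  · rw [filter_filter, filter_false_of_mem, sum_empty]
    rintro K - ⟨h1, h2⟩
    exact hI (h2 ▸ h1)

lemma card_transversals_through {T : Finset (Fin n)} (hT : Set.InjOn p T) :
    #{x ∈ transversals p | ∀ u ∈ T, x (p u) = u} = freeChoices p (T.image p) := by
  have : ({x ∈ transversals p | ∀ u ∈ T, x (p u) = u} : Finset (Fin k → Fin n)) =
      Fintype.piFinset fun i => {v | p v = i ∧ (i ∈ T.image p → v ∈ T)} := by
    ext x
    simp only [mem_filter, mem_transversals, Fintype.mem_piFinset, mem_univ, true_and]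
    constructor
    · rintro ⟨h1, h2⟩ i
      refine ⟨h1 i, fun hi => ?_⟩
      obtain ⟨u, hu, rfl⟩ := mem_image.1 hi
      rwa [h2 u hu]
    · intro h
      refine ⟨fun i => (h i).1, fun u hu => ?_⟩
      have := (h (p u)).2 (mem_image_of_mem _ hu)
      exact hT this hu (h (p u)).1
  rw [this, Fintype.card_piFinset, freeChoices]
  refine prod_congr rfl fun i _ => ?_
  split_ifs with hi
  · rw [card_eq_one]
    obtain ⟨u, hu, rfl⟩ := mem_image.1 hi
    refine ⟨u, ?_⟩
    ext v
    simp only [mem_filter, mem_univ, true_and, mem_singleton]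
    constructor
    · rintro ⟨h1, h2⟩
      exact hT (h2 hi) hu h1
    · rintro rfl
      exact ⟨rfl, fun _ => hu⟩
  · simp [hi]

lemma injOn_of_mem_colorfulCliques {J : Finset (Fin k)} {T : Finset (Fin n)}
    (hT : T ∈ colorfulCliques G p J) : Set.InjOn p T := by
  simp only [colorfulCliques, mem_filter, mem_univ, true_and] at hT
  apply card_image_iff.1
  rw [hT.2.1, hT.1]

lemma image_mem_colorfulCliques {J : Finset (Fin k)} {x : Fin k → Fin n}
    (hx : x ∈ cliqueTransversals G p J) : J.image x ∈ colorfulCliques G p J := by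
  simp only [cliqueTransversals, mem_filter] at hx
  simp only [colorfulCliques, mem_filter, mem_univ, true_and]
  refine ⟨card_image_transversal hx.1 J, ?_, ?_⟩
  · rw [image_image]
    have : p ∘ x = id := funext fun i => mem_transversals.1 hx.1 i
    rw [this, image_id]
  · intro a ha b hb hab
    obtain ⟨i, hi, rfl⟩ := mem_image.1 (mem_coe.1 ha)
    obtain ⟨j, hj, rfl⟩ := mem_image.1 (mem_coe.1 hb)
    exact hx.2 i hi j hj (fun h => hab (by rw [h]))

lemma card_filter_image_mem {J : Finset (Fin k)} {A : Finset (Finset (Fin n))}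
    (hA : A ⊆ colorfulCliques G p J) :
    #{x ∈ cliqueTransversals G p J | J.image x ∈ A} = #A * freeChoices p J := by
  rw [card_eq_sum_card_fiberwise (f := fun x => J.image x) (t := A)
    (s := {x ∈ cliqueTransversals G p J | J.image x ∈ A})
    (fun x hx => (mem_filter.1 (mem_coe.1 hx)).2)]
  rw [sum_const_nat (m := freeChoices p J)]
  intro T hT
  have hT' := hA hT
  have hinj := injOn_of_mem_colorfulCliques hT'
  simp only [colorfulCliques, mem_filter, mem_univ, true_and] at hT'
  obtain ⟨hc, rfl, hcl⟩ := hT'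
  rw [← card_transversals_through hinj]
  congr 1
  ext x
  simp only [mem_filter, cliqueTransversals]
  constructor
  · rintro ⟨⟨⟨hx, -⟩, -⟩, h⟩
    exact ⟨hx, fun u hu => ((subset_image_transversal_iff hx (I := T.image p)).1 h.ge u hu).2⟩
  · rintro ⟨hx, h⟩
    have him : (T.image p).image x = T := by
      refine (eq_of_subset_of_card_le ((subset_image_transversal_iff hx).2 fun u hu =>
        ⟨mem_image_of_mem _ hu, h u hu⟩) ?_).symm
      rw [card_image_transversal hx, hc]
    refine ⟨⟨⟨hx, fun i hi j hj hij => ?_⟩, by rwa [him]⟩, him⟩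
    obtain ⟨u, hu, rfl⟩ := mem_image.1 hi
    obtain ⟨v, hv, rfl⟩ := mem_image.1 hj
    rw [h u hu, h v hv]
    exact hcl hu hv (fun h => hij (by rw [h]))

lemma card_cliqueTransversals (J : Finset (Fin k)) :
    #(cliqueTransversals G p J) = #(colorfulCliques G p J) * freeChoices p J := by
  rw [← card_filter_image_mem Subset.rfl, filter_true_of_mem]
  exact fun x hx => image_mem_colorfulCliques hx

lemma freeChoices_insert {J : Finset (Fin k)} {j : Fin k} (hj : j ∉ J) :
    freeChoices p (insert j J) * #{v | p v = j} = freeChoices p J := by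
  rw [freeChoices, freeChoices, ← mul_prod_erase _ _ (mem_univ j),
    ← mul_prod_erase (a := j) univ (fun i => if i ∈ J then 1 else #{v | p v = i}) (mem_univ j)]
  simp only [mem_insert_self, if_true, hj, if_false, one_mul]
  rw [mul_comm]
  congr 1
  refine prod_congr rfl fun i hi => ?_
  simp [(mem_erase.1 hi).1]

lemma freeChoices_pos (hp : ∀ i, 0 < #{v | p v = i}) (J : Finset (Fin k)) :
    0 < freeChoices p J :=
  prod_pos fun i _ => by split_ifs; exacts [one_pos, hp i]

lemma card_transversals : #(transversals p) = freeChoices p ∅ := by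
  simpa using card_transversals_through (p := p) (T := ∅) (by simp)

end Spread

/-- A nonnegative weighting, supported on cliques of size between `t` and `s` all of whose pairs
have related colours, that puts weight at most one on the sets containing a given `t`-set. -/
structure IsReducedPacking {n k : ℕ} (G : SimpleGraph (Fin n)) (p : Fin n → Fin k)
    (R : Fin k → Fin k → Prop) (t s : ℕ) (g : Finset (Fin n) → ℝ) : Prop where
  nonneg : ∀ K, 0 ≤ g K
  isClique : ∀ K, g K ≠ 0 → G.IsClique (K : Set (Fin n))
  rel : ∀ K, g K ≠ 0 → ∀ u ∈ K, ∀ v ∈ K, u ≠ v → R (p u) (p v)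
  le_card : ∀ K, g K ≠ 0 → t ≤ #K
  card_le : ∀ K, g K ≠ 0 → #K ≤ s
  load_le : ∀ T : Finset (Fin n), #T = t → ∑ K with T ⊆ K, g K ≤ 1

namespace IsReducedPacking

variable {n k : ℕ} {G : SimpleGraph (Fin n)} {p : Fin n → Fin k} {R : Fin k → Fin k → Prop}
  {D : Fin k → Fin k → ℝ} {d ε lam : ℝ} {m t s : ℕ} {g : Finset (Fin n) → ℝ}

lemma injOn (hR : ∀ i j, R i j → i ≠ j) (hg : IsReducedPacking G p R t s g) {K : Finset (Fin n)}
    (hK : g K ≠ 0) : Set.InjOn p K := by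
  intro u hu v hv huv
  by_contra hne
  exact hR _ _ (hg.rel K hK u hu v hv hne) huv

lemma pattern_rel (hg : IsReducedPacking G p R t s g) {I : Finset (Fin k)}
    (hI : patternWeight p g I ≠ 0) : ∀ i ∈ I, ∀ j ∈ I, i ≠ j → R i j := by
  obtain ⟨K, rfl, hK⟩ := exists_of_patternWeight_ne_zero hI
  intro i hi j hj hij
  obtain ⟨u, hu, rfl⟩ := mem_image.1 hi
  obtain ⟨v, hv, rfl⟩ := mem_image.1 hj
  exact hg.rel K hK u hu v hv fun h => hij (by rw [h])

lemma pattern_card_le (hg : IsReducedPacking G p R t s g) {I : Finset (Fin k)}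
    (hI : patternWeight p g I ≠ 0) : #I ≤ s := by
  obtain ⟨K, rfl, hK⟩ := exists_of_patternWeight_ne_zero hI
  exact card_image_le.trans (hg.card_le K hK)

lemma le_pattern_card (hR : ∀ i j, R i j → i ≠ j) (hg : IsReducedPacking G p R t s g)
    {I : Finset (Fin k)} (hI : patternWeight p g I ≠ 0) : t ≤ #I := by
  obtain ⟨K, rfl, hK⟩ := exists_of_patternWeight_ne_zero hI
  rw [card_image_of_injOn (hg.injOn hR hK)]
  exact hg.le_card K hK

lemma sum_patternWeight_le (hR : ∀ i j, R i j → i ≠ j) (hg : IsReducedPacking G p R t s g)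
    {J : Finset (Fin k)} (hJ : #J = t) :
    ∑ I with J ⊆ I, patternWeight p g I ≤ #(colorfulCliques G p J) := by
  have h1 := sum_patternWeight (p := p) (g := g) (fun I => J ⊆ I) (fun _ => 1)
  simp only [mul_one] at h1
  rw [h1]
  calc ∑ K with J ⊆ K.image p, g K
      ≤ ∑ K with J ⊆ K.image p, ∑ T ∈ colorfulCliques G p J, if T ⊆ K then g K else 0 := by
        refine sum_le_sum fun K hK => ?_
        by_cases hgK : g K = 0
        · simp [hgK]
        have hJK : J ⊆ K.image p := (mem_filter.1 hK).2
        have hinj := hg.injOn hR hgK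
        set T := K.filter (fun v => p v ∈ J)
        have hTK : T ⊆ K := filter_subset _ _
        have him : T.image p = J := by
          ext j
          simp only [mem_image, T, mem_filter]
          constructor
          · rintro ⟨v, ⟨_, h⟩, rfl⟩; exact h
          · intro hj
            obtain ⟨v, hv, rfl⟩ := mem_image.1 (hJK hj)
            exact ⟨v, ⟨hv, hj⟩, rfl⟩
        have hT : T ∈ colorfulCliques G p J := by
          simp only [colorfulCliques, mem_filter, mem_univ, true_and]
          refine ⟨?_, him, (hg.isClique K hgK).subset (by exact_mod_cast hTK)⟩
          rw [← him, card_image_of_injOn (hinj.mono (by exact_mod_cast hTK))]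
        have := single_le_sum (f := fun T => if T ⊆ K then g K else 0)
          (fun T _ => by split_ifs; exacts [hg.nonneg K, le_rfl]) hT
        simpa [hTK] using this
    _ ≤ ∑ K, ∑ T ∈ colorfulCliques G p J, if T ⊆ K then g K else 0 := by
        refine sum_le_sum_of_subset_of_nonneg (filter_subset _ _) fun K _ _ => ?_
        exact sum_nonneg fun T _ => by split_ifs; exacts [hg.nonneg K, le_rfl]
    _ = ∑ T ∈ colorfulCliques G p J, ∑ K with T ⊆ K, g K := by
        rw [sum_comm]
        simp only [sum_filter]
    _ ≤ ∑ T ∈ colorfulCliques G p J, 1 := by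
        refine sum_le_sum fun T hT => hg.load_le T ?_
        simp only [colorfulCliques, mem_filter] at hT
        rw [hT.2.1, hJ]
    _ = _ := by simp

lemma sum_spread_mul_card (hR : ∀ i j, R i j → i ≠ j) (hg : IsReducedPacking G p R t s g)
    (hΩ : ∀ I, patternWeight p g I ≠ 0 → #(cliqueTransversals G p I) ≠ 0) (w : ℕ → ℝ) :
    ∑ K, spread G p g K * w #K = ∑ K, g K * w #K := by
  rw [sum_spread_mul]
  have h1 := sum_patternWeight (p := p) (g := g) (fun _ => True) (fun I => w #I)
  simp only [filter_true] at h1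
  have h2 : ∑ K, g K * w #K = ∑ K, g K * w #(K.image p) := by
    refine sum_congr rfl fun K _ => ?_
    by_cases hK : g K = 0
    · simp [hK]
    · rw [card_image_of_injOn (hg.injOn hR hK)]
  rw [h2, ← h1]
  refine sum_congr rfl fun I _ => ?_
  by_cases hI : patternWeight p g I = 0
  · simp [hI]
  congr 1
  have h0 : (#(cliqueTransversals G p I) : ℝ) ≠ 0 := by exact_mod_cast hΩ I hI
  rw [sum_congr rfl (g := fun _ => w #I)]
  · simp [h0]
  · intro x hx
    rw [card_image_transversal (mem_filter.1 hx).1]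

lemma sum_spread_superset_le (h : IsRegularColoring G p R D d ε m) (hm : 0 < m)
    (hg : IsReducedPacking G p R t s g) (hlam : 0 < lam)
    (hΩ : ∀ I, patternWeight p g I ≠ 0 →
      lam * #(transversals p) ≤ #(cliqueTransversals G p I))
    {U : Finset (Fin n)} (hU : #U = t + 1) :
    ∑ K with U ⊆ K, spread G p g K ≤ 1 / (lam * m) := by
  by_cases hinj : Set.InjOn p U
  swap
  · rw [sum_eq_zero]
    · positivity
    · intro K hK
      by_contra h0
      exact hinj ((exists_of_spread_ne_zero h0).2.1.mono
        (by exact_mod_cast (mem_filter.1 hK).2))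
  obtain ⟨u, hu⟩ : U.Nonempty := card_pos.1 (by omega)
  set J := (U.erase u).image p with hJdef
  have hJ : #J = t := by
    rw [hJdef, card_image_of_injOn (hinj.mono (by exact_mod_cast erase_subset _ _)),
      card_erase_of_mem hu, hU]
    rfl
  have huJ : p u ∉ J := by
    intro hmem
    obtain ⟨v, hv, hvu⟩ := mem_image.1 hmem
    exact (mem_erase.1 hv).1 (hinj (mem_erase.1 hv).2 hu hvu)
  have hUim : U.image p = insert (p u) J := by
    rw [hJdef, ← image_insert, insert_erase hu]
  have hpos : ∀ i, 0 < #{v | p v = i} := fun i => hm.trans_le (h.card_ge i)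
  have hΩ0 : (0 : ℝ) < #(transversals p) := by
    rw [card_transversals]
    exact_mod_cast freeChoices_pos hpos ∅
  set M : ℝ := (freeChoices p (U.image p) : ℝ) with hM
  have hM0 : 0 ≤ M := by positivity
  have hNM : #(colorfulCliques G p J) * (M * m) ≤ #(transversals p) := by
    have h1 : M * m ≤ freeChoices p J := by
      rw [← freeChoices_insert huJ, ← hUim, hM]
      exact_mod_cast Nat.mul_le_mul_left _ (h.card_ge _)
    calc (#(colorfulCliques G p J) * (M * m) : ℝ)
        ≤ #(colorfulCliques G p J) * freeChoices p J := by gcongr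
      _ = #(cliqueTransversals G p J) := by rw [card_cliqueTransversals]; push_cast; rfl
      _ ≤ _ := by exact_mod_cast card_filter_le _ _
  have e1 : ∑ K with U ⊆ K, spread G p g K =
      ∑ K, spread G p g K * (if U ⊆ K then 1 else 0) := by
    rw [sum_filter]; simp
  rw [e1, sum_spread_mul]
  calc _ ≤ ∑ I with J ⊆ I, patternWeight p g I * (M / (lam * #(transversals p))) := by
        rw [sum_filter]
        refine sum_le_sum fun I _ => ?_
        by_cases hI : patternWeight p g I = 0
        · simp [hI]
        split_ifs with hJI
        · refine mul_le_mul_of_nonneg_left ?_ (patternWeight_nonneg hg.nonneg I)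
          refine div_le_div₀ hM0 ?_ (by positivity) (hΩ I hI)
          rw [hM, ← card_transversals_through hinj, ← sum_filter, sum_const, nsmul_eq_mul,
            mul_one]
          norm_cast
          refine card_le_card fun x hx => ?_
          rw [mem_filter] at hx ⊢
          have hxt := (mem_filter.1 hx.1).1
          exact ⟨hxt, fun v hv => ((subset_image_transversal_iff hxt).1 hx.2 v hv).2⟩
        · rw [sum_eq_zero]
          · simp
          · intro x hx
            rw [if_neg]
            intro hUx
            apply hJI
            intro i hi
            obtain ⟨v, hv, rfl⟩ := mem_image.1 hi
            exact ((subset_image_transversal_iff (mem_filter.1 hx).1).1 hUx v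
              (mem_erase.1 hv).2).1
    _ = (∑ I with J ⊆ I, patternWeight p g I) * (M / (lam * #(transversals p))) := by
        rw [sum_mul]
    _ ≤ #(colorfulCliques G p J) * (M / (lam * #(transversals p))) := by
        gcongr
        exact hg.sum_patternWeight_le h.ne hJ
    _ ≤ 1 / (lam * m) := by
        have hm' : (0 : ℝ) < m := by exact_mod_cast hm
        rw [← mul_div_assoc, div_le_div_iff₀ (by positivity) (by positivity)]
        nlinarith

lemma sum_sum_spread_le (h : IsRegularColoring G p R D d ε m) (hm : 0 < m)
    (hd : 0 < d) (hd1 : d ≤ 1) (hε : 0 ≤ ε)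
    (hg : IsReducedPacking G p R t s g) (hlam : 0 < lam)
    (hΩ : ∀ I, patternWeight p g I ≠ 0 →
      lam * #(transversals p) ≤ #(cliqueTransversals G p I))
    {J : Finset (Fin k)} (hJ : #J = t) {A : Finset (Finset (Fin n))}
    (hA : A ⊆ colorfulCliques G p J) :
    ∑ T ∈ A, ∑ K with T ⊆ K, spread G p g K ≤
      #A + 2 * (s * s : ℕ) * ε / lam * #(colorfulCliques G p J) := by
  rcases Nat.eq_zero_or_pos #(colorfulCliques G p J) with hN | hN
  · rw [card_eq_zero] at hN
    rw [hN, subset_empty] at hA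
    simp [hA, hN]
  have hpos : ∀ i, 0 < #{v | p v = i} := fun i => hm.trans_le (h.card_ge i)
  have hΩ0 : (0 : ℝ) < #(transversals p) := by
    rw [card_transversals]
    exact_mod_cast freeChoices_pos hpos ∅
  have hM : (0 : ℝ) < freeChoices p J := by exact_mod_cast freeChoices_pos hpos J
  have hN' : (0 : ℝ) < #(colorfulCliques G p J) := by exact_mod_cast hN
  set err : ℝ := 2 * (s * s : ℕ) * ε / lam with herr
  have herr0 : 0 ≤ err := by positivity
  have e1 : ∑ T ∈ A, ∑ K with T ⊆ K, spread G p g K =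
      ∑ K, spread G p g K * ∑ T ∈ A, if T ⊆ K then 1 else 0 := by
    simp only [sum_filter]
    rw [sum_comm]
    refine sum_congr rfl fun K _ => ?_
    rw [mul_sum]
    simp
  rw [e1, sum_spread_mul]
  calc _ ≤ ∑ I with J ⊆ I, patternWeight p g I * (#A / #(colorfulCliques G p J) + err) := by
        rw [sum_filter]
        refine sum_le_sum fun I _ => ?_
        by_cases hI : patternWeight p g I = 0
        · simp [hI]
        have sub : ∀ x ∈ cliqueTransversals G p I, ∀ T ∈ A, T ⊆ I.image x →
            J ⊆ I ∧ T = J.image x := by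
          intro x hx T hT hTx
          have hTc := hA hT
          simp only [colorfulCliques, mem_filter, mem_univ, true_and] at hTc
          have hx := (mem_filter.1 hx).1
          have hTx := (subset_image_transversal_iff hx).1 hTx
          constructor
          · intro i hi
            rw [← hTc.2.1] at hi
            obtain ⟨v, hv, rfl⟩ := mem_image.1 hi
            exact (hTx v hv).1
          · refine eq_of_subset_of_card_le ((subset_image_transversal_iff hx).2 fun v hv =>
              ⟨?_, (hTx v hv).2⟩) ?_
            · rw [← hTc.2.1]; exact mem_image_of_mem _ hv
            · rw [card_image_transversal hx, hTc.1]
        have hω := hΩ I hI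
        have hω0 : (0 : ℝ) < #(cliqueTransversals G p I) := lt_of_lt_of_le (by positivity) hω
        split_ifs with hJI
        · refine mul_le_mul_of_nonneg_left ?_ (patternWeight_nonneg hg.nonneg I)
          have c1 : (∑ x ∈ cliqueTransversals G p I,
              ∑ T ∈ A, if T ⊆ I.image x then (1 : ℝ) else 0) ≤
              #{x ∈ cliqueTransversals G p I | J.image x ∈ A} := by
            rw [card_filter]
            push_cast
            refine sum_le_sum fun x hx => ?_
            calc (∑ T ∈ A, if T ⊆ I.image x then (1 : ℝ) else 0)
                ≤ ∑ T ∈ A, if T = J.image x then (1 : ℝ) else 0 := by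
                  refine sum_le_sum fun T hT => ?_
                  split_ifs with h1 h2
                  · exact le_rfl
                  · exact absurd (sub x hx T hT h1).2 h2
                  · exact zero_le_one
                  · exact le_rfl
              _ = _ := by simp
          have c2 : (#{x ∈ cliqueTransversals G p I | J.image x ∈ A} : ℝ) *
              #(cliqueTransversals G p J) ≤
              #{x ∈ cliqueTransversals G p J | J.image x ∈ A} * #(cliqueTransversals G p I) +
              2 * ((s * s : ℕ) * ε * #(transversals p)) * #(cliqueTransversals G p J) := by
            convert h.card_filter_cliqueTransversals_le hm hd hd1 hε
              (hg.pattern_card_le hI) hJI (hg.pattern_rel hI) (fun x => J.image x ∈ A) (by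
                intro x y hxy
                rw [image_congr (g := y)]
                exact fun i hi => hxy i hi)
          rw [card_filter_image_mem hA, card_cliqueTransversals J] at c2
          rw [div_le_iff₀ hω0]
          refine c1.trans ?_
          set a : ℝ := (#{x ∈ cliqueTransversals G p I | J.image x ∈ A} : ℝ)
          set ω : ℝ := (#(cliqueTransversals G p I) : ℝ)
          set N : ℝ := (#(colorfulCliques G p J) : ℝ)
          set M : ℝ := (freeChoices p J : ℝ)
          have c3 : 2 * ((s * s : ℕ) * ε * #(transversals p)) ≤ err * ω := by
            calc 2 * ((s * s : ℕ) * ε * #(transversals p))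
                = err * (lam * #(transversals p)) := by rw [herr]; field_simp
              _ ≤ _ := by gcongr
          push_cast at c2
          have c4 : a * (N * M) ≤ (#A / N + err) * ω * (N * M) := by
            calc a * (N * M) ≤ #A * M * ω + err * ω * (N * M) := by
                  refine c2.trans ?_
                  push_cast at c3
                  exact add_le_add_right
                    (mul_le_mul_of_nonneg_right c3 (mul_pos hN' hM).le) _
              _ = _ := by field_simp
          exact le_of_mul_le_mul_right c4 (by positivity)
        · rw [sum_eq_zero]
          · simp
          · intro x hx
            refine sum_eq_zero fun T hT => if_neg fun hTx => hJI (sub x hx T hT hTx).1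
    _ = (∑ I with J ⊆ I, patternWeight p g I) * (#A / #(colorfulCliques G p J) + err) := by
        rw [sum_mul]
    _ ≤ #(colorfulCliques G p J) * (#A / #(colorfulCliques G p J) + err) := by
        gcongr
        exact hg.sum_patternWeight_le h.ne hJ
    _ = _ := by field_simp

end IsReducedPacking

namespace IsReducedPacking

variable {n k : ℕ} {G : SimpleGraph (Fin n)} {p : Fin n → Fin k} {R : Fin k → Fin k → Prop}
  {D : Fin k → Fin k → ℝ} {d ε lam : ℝ} {m t s : ℕ} {g : Finset (Fin n) → ℝ}

lemma sum_excess_le (h : IsRegularColoring G p R D d ε m) (hm : 0 < m)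
    (hd : 0 < d) (hd1 : d ≤ 1) (hε : 0 ≤ ε)
    (hg : IsReducedPacking G p R t s g) (hlam : 0 < lam)
    (hΩ : ∀ I, patternWeight p g I ≠ 0 →
      lam * #(transversals p) ≤ #(cliqueTransversals G p I)) :
    ∑ T ∈ univ.powersetCard t, max (∑ K with T ⊆ K, spread G p g K - 1) 0 ≤
      2 * (s * s : ℕ) * ε / lam * (n : ℝ) ^ t := by
  set err : ℝ := 2 * (s * s : ℕ) * ε / lam with herr
  have herr0 : 0 ≤ err := by positivity
  set load : Finset (Fin n) → ℝ := fun T => ∑ K with T ⊆ K, spread G p g K with hload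
  set A : Finset (Fin k) → Finset (Finset (Fin n)) := fun J =>
    {T ∈ ({T ∈ univ.powersetCard t | 1 < load T} : Finset (Finset (Fin n))) | T.image p = J}
    with hAdef
  have hA : ∀ J, ∀ T ∈ A J, #J = t ∧ T ∈ colorfulCliques G p J := by
    intro J T hT
    simp only [hAdef, mem_filter, mem_powersetCard, subset_univ, true_and] at hT
    obtain ⟨⟨hTt, hl⟩, rfl⟩ := hT
    obtain ⟨K, hK, h0⟩ := exists_ne_zero_of_sum_ne_zero (by linarith : load T ≠ 0)
    have hTK : (T : Set (Fin n)) ⊆ K := by exact_mod_cast (mem_filter.1 hK).2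
    obtain ⟨h1, h2, -⟩ := exists_of_spread_ne_zero h0
    have hc := card_image_of_injOn (h2.mono hTK)
    simp only [colorfulCliques, mem_filter, mem_univ, true_and]
    exact ⟨by rw [hc, hTt], hc.symm, h1.subset hTK⟩
  have key : ∀ J, ∑ T ∈ A J, (load T - 1) ≤
      err * #{T ∈ univ.powersetCard t | T.image p = J} := by
    intro J
    rcases (A J).eq_empty_or_nonempty with h0 | ⟨T₀, hT₀⟩
    · rw [h0, sum_empty]; positivity
    have hJ := (hA J T₀ hT₀).1
    have h1 := hg.sum_sum_spread_le h hm hd hd1 hε hlam hΩ hJ (fun T hT => (hA J T hT).2)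
    rw [sum_sub_distrib]
    simp only [sum_const, nsmul_eq_mul, mul_one]
    have h2 : (#(colorfulCliques G p J) : ℝ) ≤ #{T ∈ univ.powersetCard t | T.image p = J} := by
      norm_cast
      refine card_le_card fun T hT => ?_
      simp only [colorfulCliques, mem_filter, mem_univ, true_and, mem_powersetCard,
        subset_univ] at hT ⊢
      exact ⟨by rw [hT.1, hJ], hT.2.1⟩
    have h3 := mul_le_mul_of_nonneg_left h2 herr0
    linarith
  calc ∑ T ∈ univ.powersetCard t, max (load T - 1) 0
      = ∑ T ∈ univ.powersetCard t with 1 < load T, (load T - 1) := by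
        rw [sum_filter]
        refine sum_congr rfl fun T _ => ?_
        split_ifs with h1
        · exact max_eq_left (by linarith)
        · exact max_eq_right (by linarith)
    _ = ∑ J, ∑ T ∈ A J, (load T - 1) := (sum_fiberwise _ _ _).symm
    _ ≤ ∑ J, err * #{T ∈ univ.powersetCard t | T.image p = J} := sum_le_sum fun J _ => key J
    _ = err * #(univ.powersetCard t : Finset (Finset (Fin n))) := by
        rw [← mul_sum, card_eq_sum_card_fiberwise (f := fun T => T.image p) (t := univ)
          (s := (univ.powersetCard t : Finset (Finset (Fin n)))) (by simp)]
        push_cast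
        rfl
    _ ≤ err * (n : ℝ) ^ t := by
        gcongr
        rw [card_powersetCard, card_univ, Fintype.card_fin]
        exact_mod_cast Nat.choose_le_pow n t

end IsReducedPacking

lemma card_filter_pair_mem_le {n t : ℕ} {u v : Fin n} (huv : u ≠ v) (ht : 2 ≤ t) :
    #{T ∈ (univ : Finset (Fin n)).powersetCard t | u ∈ T ∧ v ∈ T} ≤ n ^ (t - 2) := by
  calc _ ≤ #((univ : Finset (Fin n)).powersetCard (t - 2)) := by
        refine card_le_card_of_injOn (fun T => (T.erase u).erase v) ?_ ?_
        · intro T hT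
          simp only [coe_filter, mem_powersetCard, subset_univ, true_and, Set.mem_ofPred_eq] at hT
          simp only [mem_coe, mem_powersetCard, subset_univ, true_and]
          rw [card_erase_of_mem (mem_erase.2 ⟨huv.symm, hT.2.2⟩), card_erase_of_mem hT.2.1, hT.1]
          omega
        · intro T hT T' hT' hTT
          simp only [coe_filter, mem_powersetCard, subset_univ, true_and, Set.mem_ofPred_eq]
            at hT hT'
          have h1 : (T.erase u).erase v = (T'.erase u).erase v := hTT
          rw [← insert_erase hT.2.1, ← insert_erase hT'.2.1,
            ← insert_erase (mem_erase.2 ⟨huv.symm, hT.2.2⟩),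
            ← insert_erase (mem_erase.2 ⟨huv.symm, hT'.2.2⟩), h1]
    _ ≤ _ := by
        rw [card_powersetCard, card_univ, Fintype.card_fin]
        exact Nat.choose_le_pow n _

/-- The weight of a packing on sets containing one of few pairs is small. -/
lemma sum_packing_le_of_pairs {n t : ℕ} (ht : 2 ≤ t) {g : Finset (Fin n) → ℝ}
    (hg : ∀ K, 0 ≤ g K) (hload : ∀ T : Finset (Fin n), #T = t → ∑ K with T ⊆ K, g K ≤ 1)
    {S : Finset (Finset (Fin n))} {E : Finset (Fin n × Fin n)} (hE : ∀ e ∈ E, e.1 ≠ e.2)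
    (hS : ∀ K ∈ S, g K ≠ 0 → t ≤ #K ∧ ∃ e ∈ E, e.1 ∈ K ∧ e.2 ∈ K) :
    ∑ K ∈ S, g K ≤ #E * (n : ℝ) ^ (t - 2) := by
  have hite : ∀ (T K : Finset (Fin n)), 0 ≤ if T ⊆ K then g K else 0 := fun T K => by
    split_ifs; exacts [hg K, le_rfl]
  calc ∑ K ∈ S, g K
      ≤ ∑ K ∈ S, ∑ e ∈ E, ∑ T ∈ univ.powersetCard t with e.1 ∈ T ∧ e.2 ∈ T,
          if T ⊆ K then g K else 0 := by
        refine sum_le_sum fun K hK => ?_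
        by_cases h0 : g K = 0
        · simp [h0]
        obtain ⟨htK, e, he, h1, h2⟩ := hS K hK h0
        obtain ⟨T, hT, hTK, hTc⟩ := exists_subsuperset_card_eq
          (s := {e.1, e.2}) (t := K) (n := t) (by simp [insert_subset_iff, h1, h2])
          (card_le_two.trans ht) htK
        have hTm : T ∈ (univ.powersetCard t : Finset (Finset (Fin n))).filter
            (fun T => e.1 ∈ T ∧ e.2 ∈ T) := by
          simp only [mem_filter, mem_powersetCard, subset_univ, true_and]
          exact ⟨hTc, hT (by simp), hT (by simp)⟩
        calc g K = if T ⊆ K then g K else 0 := by rw [if_pos hTK]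
          _ ≤ ∑ T ∈ univ.powersetCard t with e.1 ∈ T ∧ e.2 ∈ T, if T ⊆ K then g K else 0 :=
              single_le_sum (f := fun T => if T ⊆ K then g K else 0) (fun T _ => hite T K) hTm
          _ ≤ _ := single_le_sum
              (f := fun e : Fin n × Fin n => ∑ T ∈ univ.powersetCard t with e.1 ∈ T ∧ e.2 ∈ T,
                if T ⊆ K then g K else 0)
              (fun e _ => sum_nonneg fun T _ => hite T K) he
    _ = ∑ e ∈ E, ∑ T ∈ univ.powersetCard t with e.1 ∈ T ∧ e.2 ∈ T,
          ∑ K ∈ S, if T ⊆ K then g K else 0 := by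
        rw [sum_comm]
        exact sum_congr rfl fun e _ => sum_comm
    _ ≤ ∑ e ∈ E, ∑ T ∈ univ.powersetCard t with e.1 ∈ T ∧ e.2 ∈ T, (1 : ℝ) := by
        refine sum_le_sum fun e _ => sum_le_sum fun T hT => ?_
        refine le_trans ?_ (hload T (mem_powersetCard.1 (mem_filter.1 hT).1).2)
        rw [sum_filter]
        exact sum_le_sum_of_subset_of_nonneg (subset_univ _) fun K _ _ => hite T K
    _ ≤ ∑ e ∈ E, (n : ℝ) ^ (t - 2) := by
        refine sum_le_sum fun e he => ?_
        simp only [sum_const, nsmul_eq_mul, mul_one]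
        exact_mod_cast card_filter_pair_mem_le (hE e he) ht
    _ = _ := by simp

/-- Every fractional packing of cliques of bounded size can be replaced by one of almost the same
weight in which every `(t + 1)`-set is contained in cliques of small total weight. -/
theorem exists_spread_packing (t s : ℕ) (ht : 2 ≤ t) (ε δ : ℝ) (hε : 0 < ε) (hδ : 0 < δ) :
    ∃ n₀ : ℕ, ∀ n : ℕ, n₀ ≤ n → ∀ (G : SimpleGraph (Fin n)) (g : Finset (Fin n) → ℝ) (w : ℕ → ℝ),
      (∀ i, 0 ≤ w i) → (∀ i, w i ≤ 1) → (∀ K, 0 ≤ g K) →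
      (∀ K, g K ≠ 0 → G.IsClique (K : Set (Fin n)) ∧ t ≤ #K ∧ #K ≤ s) →
      (∀ T : Finset (Fin n), #T = t → ∑ K with T ⊆ K, g K ≤ 1) →
      ∃ F : Finset (Fin n) → ℝ, (∀ K, 0 ≤ F K) ∧
        (∀ K, F K ≠ 0 → G.IsClique (K : Set (Fin n)) ∧ t ≤ #K ∧ #K ≤ s) ∧
        (∀ T : Finset (Fin n), #T = t → ∑ K with T ⊆ K, F K ≤ 1) ∧
        (∀ U : Finset (Fin n), #U = t + 1 → ∑ K with U ⊆ K, F K ≤ δ) ∧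
        ∑ K, g K * w #K - ε * (n : ℝ) ^ t ≤ ∑ K, F K * w #K := by
  obtain ⟨d, hd, hd1, H⟩ := exists_isRegularColoring (ε / 2) (by linarith)
  set C : ℕ := s * s with hC
  set lam : ℝ := d ^ C / 2 with hlam
  have hlam0 : 0 < lam := by positivity
  set η : ℝ := lam * min 1 (ε / 4) / (C + 1) with hη
  have hη0 : 0 < η := by positivity
  have hCη : C * η ≤ lam * min 1 (ε / 4) := by
    rw [hη, ← mul_div_assoc, div_le_iff₀ (by positivity)]
    have : 0 ≤ lam * min 1 (ε / 4) := by positivity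
    nlinarith
  set m : ℕ := ⌈1 / (lam * δ)⌉₊ + 1 with hm
  obtain ⟨n₀, H⟩ := H η hη0 m
  refine ⟨n₀, fun n hn G g w hw0 hw1 hg0 hgs hload => ?_⟩
  obtain ⟨k, p, R, D, hreg, hbad⟩ := H n hn G
  set good : Finset (Fin n) → Prop := fun K => ∀ u ∈ K, ∀ v ∈ K, u ≠ v → R (p u) (p v)
    with hgood
  set g' : Finset (Fin n) → ℝ := fun K => if good K then g K else 0 with hg'
  have hg'le : ∀ K, g' K ≤ g K := fun K => by
    simp only [hg']; split_ifs; exacts [le_rfl, hg0 K]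
  have hg'ne : ∀ K, g' K ≠ 0 → good K ∧ g K ≠ 0 := fun K hK => by
    simp only [hg'] at hK
    split_ifs at hK with h1
    · exact ⟨h1, hK⟩
    · exact absurd rfl hK
  have hP : IsReducedPacking G p R t s g' :=
    { nonneg := fun K => by simp only [hg']; split_ifs; exacts [hg0 K, le_rfl]
      isClique := fun K hK => (hgs K (hg'ne K hK).2).1
      rel := fun K hK => (hg'ne K hK).1
      le_card := fun K hK => (hgs K (hg'ne K hK).2).2.1
      card_le := fun K hK => (hgs K (hg'ne K hK).2).2.2
      load_le := fun T hT => (sum_le_sum fun K _ => hg'le K).trans (hload T hT) }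
  have hm0 : 0 < m := by omega
  have hΩ : ∀ I, patternWeight p g' I ≠ 0 →
      lam * #(transversals p) ≤ #(cliqueTransversals G p I) := by
    intro I hI
    refine le_trans ?_ (hreg.le_card_cliqueTransversals hm0 hd hd1 hη0.le
      (hP.pattern_card_le hI) (hP.pattern_rel hI))
    gcongr
    have : lam * min 1 (ε / 4) ≤ lam := mul_le_of_le_one_right hlam0.le (min_le_left _ _)
    have : d ^ C = lam + lam := by rw [hlam]; ring
    linarith
  have hΩ0 : (0 : ℝ) < #(transversals p) := by
    rw [card_transversals]
    exact_mod_cast freeChoices_pos (fun i => hm0.trans_le (hreg.card_ge i)) ∅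
  have hΩne : ∀ I, patternWeight p g' I ≠ 0 → #(cliqueTransversals G p I) ≠ 0 := by
    intro I hI h0
    have := hΩ I hI
    rw [h0] at this
    have : 0 < lam * #(transversals p) := by positivity
    simp at *
    linarith
  have hex := hP.sum_excess_le hreg hm0 hd hd1 hη0.le hlam0 hΩ
  have hcod := fun U => hP.sum_spread_superset_le hreg hm0 hlam0 hΩ (U := U)
  have htot := hP.sum_spread_mul_card hreg.ne hΩne w
  have hlost : ∑ K, (g K - g' K) ≤ ε / 2 * (n : ℝ) ^ t := by
    have h1 : ∑ K, (g K - g' K) = ∑ K with ¬ good K, g K := by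
      rw [sum_filter]
      refine sum_congr rfl fun K _ => ?_
      simp only [hg']
      by_cases h : good K <;> simp [h]
    rw [h1]
    refine (sum_packing_le_of_pairs ht hg0 hload
      (E := {q : Fin n × Fin n | G.Adj q.1 q.2 ∧ ¬ R (p q.1) (p q.2)})
      (fun e he => (mem_filter.1 he).2.1.ne) ?_).trans ?_
    · intro K hK h0
      have hb := (mem_filter.1 hK).2
      simp only [hgood] at hb
      push Not at hb
      obtain ⟨u, hu, v, hv, huv, hr⟩ := hb
      refine ⟨(hgs K h0).2.1, (u, v), ?_, hu, hv⟩
      simp only [mem_filter, mem_univ, true_and]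
      exact ⟨(hgs K h0).1 hu hv huv, hr⟩
    · calc _ ≤ (ε / 2 * (n : ℝ) ^ 2) * (n : ℝ) ^ (t - 2) := by gcongr
        _ = _ := by rw [mul_assoc, ← pow_add]; congr 2; omega
  obtain ⟨F, hF0, hFle, hFload, hFloss⟩ := exists_le_load_le_one
    (α := {T : Finset (Fin n) // #T = t})
    (fun K : Finset (Fin n) => ({T | T.1 ⊆ K} : Finset {T : Finset (Fin n) // #T = t}))
    (spread G p g') (spread_nonneg hP.nonneg)
  have hvl : ∀ (F : Finset (Fin n) → ℝ) (T : {T : Finset (Fin n) // #T = t}), vertexLoad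
      (fun K : Finset (Fin n) => ({T | T.1 ⊆ K} : Finset {T : Finset (Fin n) // #T = t})) F T
      = ∑ K with T.1 ⊆ K, F K := by
    intro F T
    rw [sum_filter, vertexLoad]
    simp
  simp only [hvl] at hFload hFloss
  have hsub : ∑ T : {T : Finset (Fin n) // #T = t},
      max (∑ K with T.1 ⊆ K, spread G p g' K - 1) 0 =
      ∑ T ∈ univ.powersetCard t, max (∑ K with T ⊆ K, spread G p g' K - 1) 0 := by
    rw [sum_subtype (univ.powersetCard t) (p := fun T : Finset (Fin n) => #T = t) (by simp)
      (fun T => max (∑ K with T ⊆ K, spread G p g' K - 1) 0)]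
  rw [hsub] at hFloss
  refine ⟨F, hF0, ?_, fun T hT => hFload ⟨T, hT⟩, ?_, ?_⟩
  · intro K hK
    have hs : spread G p g' K ≠ 0 := fun h0 =>
      hK (le_antisymm (h0 ▸ hFle K) (hF0 K))
    obtain ⟨h1, -, I, hI, hc⟩ := exists_of_spread_ne_zero hs
    exact ⟨h1, hc ▸ hP.le_pattern_card hreg.ne hI, hc ▸ hP.pattern_card_le hI⟩
  · intro U hU
    refine (sum_le_sum fun K _ => hFle K).trans ((hcod U hU).trans ?_)
    have h1 : 1 / (lam * δ) ≤ m := (Nat.le_ceil _).trans (by rw [hm]; push_cast; linarith)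
    have hm' : (0 : ℝ) < m := by exact_mod_cast hm0
    rw [div_le_iff₀ (by positivity)] at h1 ⊢
    linarith
  · have h1 : ∑ K, spread G p g' K * w #K - ∑ K, F K * w #K ≤
        2 * (C : ℕ) * η / lam * (n : ℝ) ^ t := by
      rw [← sum_sub_distrib]
      refine le_trans (sum_le_sum fun K _ => ?_) (hFloss.trans hex)
      rw [← sub_mul]
      exact mul_le_of_le_one_right (sub_nonneg.2 (hFle K)) (hw1 _)
    have h2 : ∑ K, g K * w #K - ∑ K, g' K * w #K ≤ ε / 2 * (n : ℝ) ^ t := by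
      rw [← sum_sub_distrib]
      refine le_trans (sum_le_sum fun K _ => ?_) hlost
      rw [← sub_mul]
      exact mul_le_of_le_one_right (sub_nonneg.2 (hg'le K)) (hw1 _)
    have h3 : 2 * (C : ℕ) * η / lam ≤ ε / 2 := by
      rw [div_le_iff₀ hlam0]
      have : lam * min 1 (ε / 4) ≤ lam * (ε / 4) := by gcongr; exact min_le_right _ _
      linarith
    have h4 : 2 * (C : ℕ) * η / lam * (n : ℝ) ^ t ≤ ε / 2 * (n : ℝ) ^ t := by gcongr
    linarith

lemma card_superset_subset_powersetCard {V : Type*} [Fintype V] [DecidableEq V] {T L : Finset V}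
    {s : ℕ} (hTL : T ⊆ L) (hs : #T ≤ s) :
    #{K : Finset V | (T ⊆ K ∧ #K = s) ∧ K ⊆ L} = (#L - #T).choose (s - #T) := by
  rw [← card_sdiff_of_subset hTL, ← card_powersetCard]
  refine card_nbij' (· \ T) (· ∪ T) ?_ ?_ ?_ ?_
  · intro K hK
    simp only [coe_filter, mem_univ, true_and, Set.mem_ofPred_eq] at hK
    simp only [mem_coe, mem_powersetCard]
    obtain ⟨⟨h1, h2⟩, h3⟩ := hK
    exact ⟨sdiff_subset_sdiff h3 le_rfl, by rw [card_sdiff_of_subset h1, h2]⟩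
  · intro K hK
    simp only [mem_coe, mem_powersetCard] at hK
    simp only [coe_filter, mem_univ, true_and, Set.mem_ofPred_eq]
    obtain ⟨h1, h2⟩ := hK
    refine ⟨⟨subset_union_right, ?_⟩, union_subset (h1.trans sdiff_subset) hTL⟩
    rw [card_union_of_disjoint (disjoint_of_subset_left h1 sdiff_disjoint), h2]
    omega
  · intro K hK
    simp only [coe_filter, mem_univ, true_and, Set.mem_ofPred_eq] at hK
    exact sdiff_union_of_subset hK.1.1
  · intro K hK
    simp only [mem_coe, mem_powersetCard] at hK
    exact union_sdiff_cancel_right (disjoint_of_subset_left hK.1 sdiff_disjoint)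

/-- Replacing every clique with more than `s` vertices by the uniform distribution on its
`s`-subsets turns a fractional decomposition into one using only cliques of size in `[t, s]`. -/
lemma IsFracDecomp.exists_truncation {V : Type} [Fintype V] [DecidableEq V] {t s : ℕ}
    {G : SimpleGraph V} {f : Finset V → ℝ} (hf : IsFracDecomp t G f) (ht : 1 ≤ t) (hts : t ≤ s) :
    ∃ g, IsFracDecomp t G g ∧ (∀ K, g K ≠ 0 → t ≤ #K ∧ #K ≤ s) ∧ ∀ K, #K ≠ s → g K ≤ f K := by
  obtain ⟨hf0, hfc, hf1⟩ := hf
  have hU0 : ∀ K : Finset V,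
      0 ≤ ∑ L with K ⊆ L, f L / ((#L - t).choose (s - t) : ℝ) := fun K =>
    sum_nonneg fun L _ => div_nonneg (hf0 L) (by positivity)
  refine ⟨fun K => if #K < t then 0 else if #K < s then f K else if #K = s then
    ∑ L with K ⊆ L, f L / ((#L - t).choose (s - t) : ℝ) else 0, ⟨?_, ?_, ?_⟩, ?_, ?_⟩
  · intro K
    have := hf0 K
    have := hU0 K
    dsimp only
    split_ifs <;> first | exact le_rfl | assumption
  · intro K hK
    dsimp only
    split_ifs with h1 h2 h3
    · rfl
    · exact hfc K hK
    · refine sum_eq_zero fun L hL => ?_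
      rw [hfc L, zero_div]
      rintro ⟨-, hL2⟩
      refine hK ⟨card_pos.1 (by omega), hL2.subset ?_⟩
      exact_mod_cast (mem_filter.1 hL).2
    · rfl
  · intro T hT hTc
    rw [← hf1 T hT hTc]
    have key : ∑ K with T ⊆ K ∧ #K = s, ∑ L with K ⊆ L, f L / ((#L - t).choose (s - t) : ℝ) =
        ∑ L with T ⊆ L ∧ s ≤ #L, f L := by
      have h1 : ∀ L : Finset V, ∑ K with (T ⊆ K ∧ #K = s) ∧ K ⊆ L,
          f L / ((#L - t).choose (s - t) : ℝ) = if T ⊆ L ∧ s ≤ #L then f L else 0 := by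
        intro L
        split_ifs with h
        · rw [sum_const, card_superset_subset_powersetCard h.1 (by omega), hT, nsmul_eq_mul]
          have : ((#L - t).choose (s - t) : ℝ) ≠ 0 := by
            exact_mod_cast (Nat.choose_pos (by omega)).ne'
          field_simp
        · refine sum_eq_zero fun K hK => absurd ?_ h
          obtain ⟨⟨h2, h3⟩, h4⟩ := (mem_filter.1 hK).2
          exact ⟨h2.trans h4, h3 ▸ card_le_card h4⟩
      rw [sum_filter (fun L => T ⊆ L ∧ s ≤ #L), ← sum_congr rfl fun L _ => h1 L]
      refine sum_comm' fun K L => ?_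
      simp
    have h2 : ∑ K with T ⊆ K, f K =
        ∑ K with T ⊆ K ∧ #K < s, f K + ∑ L with T ⊆ L ∧ s ≤ #L, f L := by
      rw [← sum_filter_add_sum_filter_not _ (fun K => #K < s)]
      simp only [filter_filter, not_lt]
    rw [h2, ← key]
    simp only [sum_filter]
    rw [← sum_add_distrib]
    refine sum_congr rfl fun K _ => ?_
    by_cases hTK : T ⊆ K
    · have := card_le_card hTK
      have h3 : ¬ #K < t := by omega
      by_cases h4 : #K < s
      · simp [hTK, h3, h4, h4.ne]
      · simp [hTK, h3, h4]
    · simp [hTK]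
  · intro K hK
    by_contra h
    refine hK ?_
    dsimp only
    split_ifs <;> first | rfl | omega
  · intro K hK
    have := hf0 K
    dsimp only
    split_ifs <;> first | exact le_rfl | assumption

/-- Double counting of the pairs formed by a `t`-clique and a clique containing it. -/
lemma IsFracDecomp.sum_choose {V : Type} [Fintype V] [DecidableEq V] {t : ℕ}
    {G : SimpleGraph V} {f : Finset V → ℝ} (hf : IsFracDecomp t G f) :
    ∑ K, f K * ((#K).choose t : ℝ) = #{T : Finset V | #T = t ∧ G.IsClique (T : Set V)} := by
  obtain ⟨hf0, hfc, hf1⟩ := hf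
  have h1 : ∀ K, f K * ((#K).choose t : ℝ) =
      ∑ T with #T = t ∧ G.IsClique (T : Set V), if T ⊆ K then f K else 0 := by
    intro K
    by_cases hK : IsCliqueOf G K
    · rw [← sum_filter, sum_const, filter_filter, nsmul_eq_mul, mul_comm, ← card_powersetCard]
      congr 3
      ext T
      simp only [mem_powersetCard, mem_filter, mem_univ, true_and]
      constructor
      · rintro ⟨h1, h2⟩
        exact ⟨⟨h2, hK.2.subset (by exact_mod_cast h1)⟩, h1⟩
      · rintro ⟨⟨h1, -⟩, h2⟩
        exact ⟨h2, h1⟩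
    · simp [hfc K hK]
  rw [sum_congr rfl fun K _ => h1 K, sum_comm, card_eq_sum_ones, Nat.cast_sum]
  refine sum_congr rfl fun T hT => ?_
  obtain ⟨hT1, hT2⟩ := (mem_filter.1 hT).2
  rw [← sum_filter, hf1 T hT1 hT2, Nat.cast_one]

/-- A family of cliques no two of which share a `t`-set extends to an integer decomposition by
adding the uncovered `t`-cliques. -/
lemma exists_isIntDecomp_of_packing {V : Type} [Fintype V] [DecidableEq V] {t : ℕ} (ht : 1 ≤ t)
    {G : SimpleGraph V} {M : Finset (Finset V)}
    (hM : ∀ K ∈ M, G.IsClique (K : Set V) ∧ t ≤ #K)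
    (hMd : ∀ T : Finset V, #T = t → ∀ K ∈ M, ∀ L ∈ M, T ⊆ K → T ⊆ L → K = L) (c : ℕ → ℝ) :
    ∃ h, IsIntDecomp t G h ∧ cliqueCost c h =
      c t * #{T : Finset V | #T = t ∧ G.IsClique (T : Set V)} -
        ∑ K ∈ M, ((#K).choose t * c t - c #K) := by
  set N : Finset (Finset V) :=
    {T : Finset V | (#T = t ∧ G.IsClique (T : Set V)) ∧ ∀ L ∈ M, ¬ T ⊆ L} with hN
  have hmemN : ∀ T, T ∈ N ↔ (#T = t ∧ G.IsClique (T : Set V)) ∧ ∀ L ∈ M, ¬ T ⊆ L := by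
    intro T; simp [hN]
  have hdisj : Disjoint M N := by
    rw [disjoint_left]
    exact fun K hK hKN => ((hmemN K).1 hKN).2 K hK subset_rfl
  set h : Finset V → ℝ := fun K => if K ∈ M ∪ N then 1 else 0 with hh
  have hsum : ∀ φ : Finset V → ℝ, ∑ K, h K * φ K = ∑ K ∈ M, φ K + ∑ K ∈ N, φ K := by
    intro φ
    rw [← sum_union hdisj]
    simp only [hh, ite_mul, one_mul, zero_mul, sum_ite_mem, univ_inter]
  have hdec : IsFracDecomp t G h := by
    refine ⟨fun K => ?_, fun K hK => ?_, fun T hT hTc => ?_⟩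
    · simp only [hh]; split_ifs <;> norm_num
    · simp only [hh]
      rw [if_neg]
      rw [mem_union, hmemN]
      rintro (h1 | h1)
      · exact hK ⟨card_pos.1 (by have := (hM K h1).2; omega), (hM K h1).1⟩
      · exact hK ⟨card_pos.1 (by have := h1.1.1; omega), h1.1.2⟩
    · have hone : ∃ K, K ∈ M ∪ N ∧ T ⊆ K ∧ ∀ L, L ∈ M ∪ N → T ⊆ L → L = K := by
        by_cases hc : ∃ K ∈ M, T ⊆ K
        · obtain ⟨K, hK, hTK⟩ := hc
          refine ⟨K, mem_union_left _ hK, hTK, fun L hL hTL => ?_⟩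
          rcases mem_union.1 hL with hL | hL
          · exact hMd T hT L hL K hK hTL hTK
          · have h1 := (hmemN L).1 hL
            have : T = L := eq_of_subset_of_card_le hTL (by rw [hT, h1.1.1])
            exact absurd (this ▸ hTK) (h1.2 K hK)
        · push Not at hc
          refine ⟨T, mem_union_right _ ((hmemN T).2 ⟨⟨hT, hTc⟩, hc⟩), subset_rfl,
            fun L hL hTL => ?_⟩
          rcases mem_union.1 hL with hL | hL
          · exact absurd hTL (hc L hL)
          · exact (eq_of_subset_of_card_le hTL (by rw [hT, ((hmemN L).1 hL).1.1])).symm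
      obtain ⟨K, hK, hTK, huniq⟩ := hone
      rw [sum_eq_single_of_mem K (by simpa using hTK)]
      · simp only [hh, if_pos hK]
      · intro L hL hLK
        simp only [hh]
        rw [if_neg fun hLM => hLK (huniq L hLM (mem_filter.1 hL).2)]
  refine ⟨h, ⟨hdec, fun K => ?_⟩, ?_⟩
  · simp only [hh]; split_ifs <;> simp
  · have h1 : ∑ K ∈ N, c #K = #N * c t := by
      rw [sum_congr rfl fun K hK => by rw [((hmemN K).1 hK).1.1], sum_const, nsmul_eq_mul]
    have h2 : ∑ K ∈ N, ((#K).choose t : ℝ) = #N := by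
      rw [sum_congr rfl fun K hK => by rw [((hmemN K).1 hK).1.1]]
      simp
    have h3 := hdec.sum_choose
    rw [hsum, h2] at h3
    rw [cliqueCost, sum_congr rfl fun K _ => mul_comm _ _, hsum fun K => c #K, h1, ← h3,
      sum_sub_distrib, ← sum_mul]
    ring

/-- The weight of a fractional packing by cliques of bounded size is attained, up to `ε nᵗ`, by
an integer packing. -/
theorem exists_clique_packing (t s : ℕ) (ht : 2 ≤ t) (ε : ℝ) (hε : 0 < ε) :
    ∃ n₀ : ℕ, ∀ n : ℕ, n₀ ≤ n → ∀ (G : SimpleGraph (Fin n)) (g : Finset (Fin n) → ℝ) (w : ℕ → ℝ),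
      (∀ i, 0 ≤ w i) → (∀ i, w i ≤ 1) → (∀ K, 0 ≤ g K) →
      (∀ K, g K ≠ 0 → G.IsClique (K : Set (Fin n)) ∧ t ≤ #K ∧ #K ≤ s) →
      (∀ T : Finset (Fin n), #T = t → ∑ K with T ⊆ K, g K ≤ 1) →
      ∃ M : Finset (Finset (Fin n)),
        (∀ K ∈ M, G.IsClique (K : Set (Fin n)) ∧ t ≤ #K ∧ #K ≤ s) ∧
        (∀ T : Finset (Fin n), #T = t → ∀ K ∈ M, ∀ L ∈ M, T ⊆ K → T ⊆ L → K = L) ∧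
        ∑ K, g K * w #K - ε * (n : ℝ) ^ t ≤ ∑ K ∈ M, w #K := by
  obtain ⟨δ, hδ, H⟩ := exists_matching_of_small_codegree (s.choose t) (ε / 2) (by linarith)
  obtain ⟨n₀, hn₀⟩ := exists_spread_packing t s ht (ε / 2) δ (by linarith) hδ
  refine ⟨n₀, fun n hn G g w hw0 hw1 hg0 hgc hgl => ?_⟩
  obtain ⟨F, hF0, hFc, hFl, hFd, hFw⟩ := hn₀ n hn G g w hw0 hw1 hg0 hgc hgl
  let ι : Type := {K : Finset (Fin n) // t ≤ #K ∧ #K ≤ s}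
  let α : Type := {T : Finset (Fin n) // #T = t}
  let e : ι → Finset α := fun K => {T : α | T.1 ⊆ K.1}
  have hme : ∀ (K : ι) (T : α), T ∈ e K ↔ T.1 ⊆ K.1 := fun K T => by simp [e]
  have hsub : ∀ (P : Finset (Fin n) → Prop) [DecidablePred P] (φ : Finset (Fin n) → ℝ),
      (∑ i : ι, if P i.1 then F i.1 * φ i.1 else 0) = ∑ K with P K, F K * φ K := by
    intro P _ φ
    rw [sum_filter, ← sum_subtype (p := fun K => t ≤ #K ∧ #K ≤ s)
      (univ.filter fun K : Finset (Fin n) => t ≤ #K ∧ #K ≤ s) (by simp)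
      (fun K => if P K then F K * φ K else 0)]
    refine sum_subset (subset_univ _) fun K _ hK => ?_
    have : F K = 0 := by
      by_contra h
      exact hK (mem_filter.2 ⟨mem_univ _, (hFc K h).2⟩)
    simp [this]
  obtain ⟨M, hM, hMd, hMw⟩ := H ι α e (fun K => F K.1) (fun K => w #K.1) (fun K => hF0 K.1)
    (fun K => by
      obtain ⟨T, hT, hTc⟩ := exists_subset_card_eq K.2.1
      exact ⟨⟨T, hTc⟩, (hme _ _).2 hT⟩)
    (fun K => by
      refine le_trans ?_ (Nat.choose_le_choose t K.2.2)
      rw [← card_powersetCard, ← card_map (Function.Embedding.subtype _)]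
      refine card_le_card fun T hT => ?_
      obtain ⟨T, hT', rfl⟩ := mem_map.1 hT
      exact mem_powersetCard.2 ⟨(hme _ _).1 hT', T.2⟩)
    (fun K => hw0 _) (fun K => hw1 _)
    (fun T => by
      have := hsub (fun K => T.1 ⊆ K) (fun _ => 1)
      simp only [mul_one] at this
      simp only [vertexLoad, hme]
      rw [this]
      exact hFl T.1 T.2)
    (fun T T' hTT' => by
      have := hsub (fun K => T.1 ⊆ K ∧ T'.1 ⊆ K) (fun _ => 1)
      simp only [mul_one] at this
      simp only [hme]
      rw [this]
      have hlt : t + 1 ≤ #(T.1 ∪ T'.1) := by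
        by_contra hcon
        have h1 : T.1 = T.1 ∪ T'.1 :=
          eq_of_subset_of_card_le subset_union_left (by rw [T.2]; omega)
        have h2 : T'.1 = T.1 ∪ T'.1 :=
          eq_of_subset_of_card_le subset_union_right (by rw [T'.2]; omega)
        exact hTT' (Subtype.ext (h1.trans h2.symm))
      obtain ⟨U, hU, hUc⟩ := exists_subset_card_eq hlt
      refine le_trans (sum_le_sum_of_subset_of_nonneg ?_ fun K _ _ => hF0 K) (hFd U hUc)
      intro K hK
      obtain ⟨h1, h2⟩ := (mem_filter.1 hK).2
      exact mem_filter.2 ⟨mem_univ _, hU.trans (union_subset h1 h2)⟩)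
  refine ⟨M.map (Function.Embedding.subtype _), ?_, ?_, ?_⟩
  · intro K hK
    obtain ⟨K, hKM, rfl⟩ := mem_map.1 hK
    exact hFc _ (hM K hKM)
  · intro T hT K hK L hL hTK hTL
    obtain ⟨K, hKM, rfl⟩ := mem_map.1 hK
    obtain ⟨L, hLM, rfl⟩ := mem_map.1 hL
    by_contra hKL
    have := hMd K hKM L hLM fun h => hKL (by rw [h])
    exact disjoint_left.1 this ((hme K ⟨T, hT⟩).2 hTK) ((hme L ⟨T, hT⟩).2 hTL)
  · rw [sum_map]
    have h1 := hsub (fun _ => True) (fun K => w #K)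
    simp only [if_true, filter_true] at h1
    have h2 : (Fintype.card α : ℝ) ≤ (n : ℝ) ^ t := by
      have : Fintype.card α = n.choose t := by
        simp only [α]
        rw [Fintype.card_finset_len, Fintype.card_fin]
      rw [this]
      exact_mod_cast Nat.choose_le_pow n t
    rw [h1] at hMw
    refine le_trans ?_ hMw
    nlinarith

lemma le_mul_of_step_le {t : ℕ} {c : ℕ → ℝ} (hstep : ∀ i, t ≤ i → c (i + 1) - c i ≤ c t) (q : ℕ) :
    c (q + t) ≤ (q + 1) * c t := by
  induction q with
  | zero => simp
  | succ q ih =>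
    have h := hstep (q + t) (by omega)
    rw [show q + 1 + t = q + t + 1 by ring]
    push_cast
    linarith

lemma succ_le_choose_add {t : ℕ} (ht : 1 ≤ t) (q : ℕ) : q + 1 ≤ (q + t).choose t := by
  rw [← Nat.choose_symm_add]
  calc q + 1 = (q + 1).choose q := by simp
    _ ≤ (q + t).choose q := Nat.choose_le_choose q (by omega)

lemma mul_le_two_mul_choose_add {t : ℕ} (ht : 2 ≤ t) (q : ℕ) :
    (q + 2) * (q + 1) ≤ 2 * (q + t).choose t := by
  have h1 : (q + 2).choose q ≤ (q + t).choose q := Nat.choose_le_choose q (by omega)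
  rw [Nat.choose_symm_add, Nat.choose_symm_add] at h1
  have h2 := Nat.choose_two_right (q + 2)
  have h3 : (q + 2) * (q + 1) = 2 * (q + 2).choose 2 := by
    rw [h2, Nat.mul_div_cancel' (Nat.even_mul_pred_self (q + 2)).two_dvd]
    rfl
  omega

/-- Under the step condition the cost of large cliques is negligible compared with the number of
`t`-sets they cover. -/
lemma exists_cost_le_mul_choose {t : ℕ} (ht : 2 ≤ t) {c : ℕ → ℝ} (hct : 0 ≤ c t)
    (hstep : ∀ i, t ≤ i → c (i + 1) - c i ≤ c t) {ρ : ℝ} (hρ : 0 < ρ) :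
    ∃ s, t ≤ s ∧ c s ≤ ρ * (s.choose t : ℝ) := by
  obtain ⟨q, hq⟩ := exists_nat_ge (2 * c t / ρ)
  refine ⟨q + t, by omega, (le_mul_of_step_le hstep q).trans ?_⟩
  rw [div_le_iff₀ hρ] at hq
  have h : (((q + 2) * (q + 1) : ℕ) : ℝ) ≤ ((2 * (q + t).choose t : ℕ) : ℝ) := by
    exact_mod_cast mul_le_two_mul_choose_add ht q
  push_cast at h
  have h1 : 0 ≤ ((q : ℝ) + 1) * (q * ρ - 2 * c t) := by
    apply mul_nonneg <;> [positivity; linarith]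
  nlinarith [mul_le_mul_of_nonneg_left h hρ.le, mul_nonneg (Nat.cast_nonneg (α := ℝ) q) hρ.le]

lemma cliqueCost_nonneg {V : Type} [Fintype V] [DecidableEq V] {t : ℕ} {G : SimpleGraph V}
    {c : ℕ → ℝ} (hc : ∀ i, 1 ≤ i → 0 ≤ c i) {f : Finset V → ℝ} (hf : IsFracDecomp t G f) :
    0 ≤ cliqueCost c f := by
  refine sum_nonneg fun K _ => ?_
  rcases K.eq_empty_or_nonempty with rfl | hK
  · rw [hf.2.1 ∅ fun h => not_nonempty_empty h.1, mul_zero]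
  · exact mul_nonneg (hc _ hK.card_pos) (hf.1 K)

/-- Truncating a fractional decomposition at clique size `s` costs at most `c_s / C(s, t)` per
`t`-set. -/
lemma IsFracDecomp.exists_truncation_cost_le {V : Type} [Fintype V] [DecidableEq V] {t s : ℕ}
    {G : SimpleGraph V} {c : ℕ → ℝ} (hc : ∀ i, 1 ≤ i → 0 ≤ c i) {ρ : ℝ} (hρ : 0 ≤ ρ)
    {f : Finset V → ℝ} (hf : IsFracDecomp t G f) (ht : 1 ≤ t) (hts : t ≤ s)
    (hcs : c s ≤ ρ * (s.choose t : ℝ)) :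
    ∃ g, IsFracDecomp t G g ∧ (∀ K, g K ≠ 0 → t ≤ #K ∧ #K ≤ s) ∧
      cliqueCost c g ≤ cliqueCost c f + ρ * (Fintype.card V : ℝ) ^ t := by
  obtain ⟨g, hg, hgs, hgf⟩ := hf.exists_truncation ht hts
  refine ⟨g, hg, hgs, ?_⟩
  have hcount : ∑ K, g K * ((#K).choose t : ℝ) ≤ (Fintype.card V : ℝ) ^ t := by
    rw [hg.sum_choose]
    have h1 : #{T : Finset V | #T = t ∧ G.IsClique (T : Set V)} ≤ (Fintype.card V).choose t := by
      rw [← card_univ, ← card_powersetCard]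
      refine card_le_card fun T hT => mem_powersetCard.2 ⟨subset_univ _, ?_⟩
      exact (mem_filter.1 hT).2.1
    exact_mod_cast h1.trans (Nat.choose_le_pow _ _)
  calc cliqueCost c g
      ≤ ∑ K, (c #K * f K + ρ * (g K * ((#K).choose t : ℝ))) := by
        refine sum_le_sum fun K _ => ?_
        have hg0 := hg.1 K
        have hf0 := hf.1 K
        rcases K.eq_empty_or_nonempty with rfl | hK
        · have hne : ¬ IsCliqueOf G (∅ : Finset V) := fun h => not_nonempty_empty h.1
          simp [hf.2.1 _ hne, hg.2.1 _ hne]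
        · have hcK := hc _ hK.card_pos
          by_cases hKs : #K = s
          · rw [hKs] at hcK ⊢
            have := mul_le_mul_of_nonneg_right hcs hg0
            have := mul_nonneg hcK hf0
            linarith
          · have := mul_le_mul_of_nonneg_left (hgf K hKs) hcK
            have : 0 ≤ ρ * (g K * ((#K).choose t : ℝ)) := by positivity
            linarith
    _ = cliqueCost c f + ρ * ∑ K, g K * ((#K).choose t : ℝ) := by
        rw [sum_add_distrib, ← mul_sum, cliqueCost]
    _ ≤ _ := by gcongr

/-- Rounding a fractional decomposition into cliques of bounded size. -/
lemma exists_isIntDecomp_cost_le {t : ℕ} (ht : 2 ≤ t) {c : ℕ → ℝ} (hc : ∀ i, 1 ≤ i → 0 ≤ c i)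
    (hct : 0 < c t) (hstep : ∀ i, t ≤ i → c (i + 1) - c i ≤ c t) {s : ℕ} (hts : t ≤ s)
    {ρ : ℝ} (hρ : 0 < ρ) : ∃ n₀ : ℕ, ∀ n : ℕ, n₀ ≤ n → ∀ (G : SimpleGraph (Fin n))
      (g : Finset (Fin n) → ℝ), IsFracDecomp t G g → (∀ K, g K ≠ 0 → t ≤ #K ∧ #K ≤ s) →
      ∃ h, IsIntDecomp t G h ∧ cliqueCost c h ≤ cliqueCost c g + ρ * (n : ℝ) ^ t := by
  set W : ℝ := s.choose t * c t with hW
  have hW0 : 0 < W := mul_pos (by exact_mod_cast Nat.choose_pos hts) hct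
  obtain ⟨n₀, H⟩ := exists_clique_packing t s ht (ρ / W) (by positivity)
  refine ⟨n₀, fun n hn G g hg hgs => ?_⟩
  set w : ℕ → ℝ := fun k => if t ≤ k ∧ k ≤ s then (k.choose t * c t - c k) / W else 0 with hw
  have hwk : ∀ k, t ≤ k → k ≤ s → W * w k = k.choose t * c t - c k := by
    intro k h1 h2
    simp only [hw, if_pos (And.intro h1 h2)]
    field_simp
  have hw0 : ∀ k, 0 ≤ w k := by
    intro k
    simp only [hw]
    split_ifs with h
    · obtain ⟨q, rfl⟩ := Nat.exists_eq_add_of_le' h.1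
      have h1 : ((q + 1 : ℕ) : ℝ) ≤ ((q + t).choose t : ℝ) := by
        exact_mod_cast succ_le_choose_add (by omega) q
      push_cast at h1
      have h2 := le_mul_of_step_le hstep q
      have h3 := mul_le_mul_of_nonneg_right h1 hct.le
      exact div_nonneg (by linarith) hW0.le
    · exact le_rfl
  have hw1 : ∀ k, w k ≤ 1 := by
    intro k
    simp only [hw]
    split_ifs with h
    · rw [div_le_one hW0]
      have h1 : (k.choose t : ℝ) ≤ s.choose t := by exact_mod_cast Nat.choose_le_choose t h.2
      have h2 := mul_le_mul_of_nonneg_right h1 hct.le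
      have h3 := hc k (by omega)
      linarith
    · exact zero_le_one
  have hgc : ∀ K, g K ≠ 0 → G.IsClique (K : Set (Fin n)) ∧ t ≤ #K ∧ #K ≤ s := by
    intro K hK
    refine ⟨?_, hgs K hK⟩
    by_contra hcon
    exact hK (hg.2.1 K fun h => hcon h.2)
  have hgl : ∀ T : Finset (Fin n), #T = t → ∑ K with T ⊆ K, g K ≤ 1 := by
    intro T hT
    by_cases hTc : G.IsClique (T : Set (Fin n))
    · exact (hg.2.2 T hT hTc).le
    · rw [sum_eq_zero fun K hK => ?_]
      · exact zero_le_one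
      · exact hg.2.1 K fun h => hTc (h.2.subset (by exact_mod_cast (mem_filter.1 hK).2))
  obtain ⟨M, hM, hMd, hMw⟩ := H n hn G g w hw0 hw1 hg.1 hgc hgl
  obtain ⟨h, hh, hcost⟩ := exists_isIntDecomp_of_packing (by omega)
    (fun K hK => ⟨(hM K hK).1, (hM K hK).2.1⟩) hMd c
  refine ⟨h, hh, ?_⟩
  have h1 : ∑ K ∈ M, ((#K).choose t * c t - c #K) = W * ∑ K ∈ M, w #K := by
    rw [mul_sum]
    exact sum_congr rfl fun K hK => (hwk _ (hM K hK).2.1 (hM K hK).2.2).symm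
  have h2 : W * ∑ K, g K * w #K =
      c t * #{T : Finset (Fin n) | #T = t ∧ G.IsClique (T : Set (Fin n))} - cliqueCost c g := by
    rw [← hg.sum_choose, cliqueCost, mul_sum, mul_sum, ← sum_sub_distrib]
    refine sum_congr rfl fun K _ => ?_
    by_cases h0 : g K = 0
    · simp [h0]
    · have := hwk _ (hgs K h0).1 (hgs K h0).2
      linear_combination g K * this
  have h3 := mul_le_mul_of_nonneg_left hMw hW0.le
  have h4 : W * (∑ K, g K * w #K - ρ / W * (n : ℝ) ^ t) =
      W * ∑ K, g K * w #K - ρ * (n : ℝ) ^ t := by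
    field_simp
  rw [hcost, h1]
  linarith

/-- Theorem 1.10: the additive integrality gap for `t`-clique decompositions is
`o(nᵗ)`: if `c_i ≥ 1` and `c_{i+1} - c_i ≤ c_t` for all `i ≥ t`, then for every
`ρ > 0` and all sufficiently large `n`, `π_t(G,c) ≤ π*_t(G,c) + ρ nᵗ`. -/
theorem stmt7 (t : ℕ) (ht : 2 ≤ t) (c : ℕ → ℝ) (hc : ∀ i, 1 ≤ i → 0 ≤ c i)
    (hc1 : ∀ i, t ≤ i → 1 ≤ c i) (hstep : ∀ i, t ≤ i → c (i + 1) - c i ≤ c t) :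
    ∀ ρ : ℝ, 0 < ρ → ∃ n₀ : ℕ, ∀ n : ℕ, n₀ < n → ∀ G : SimpleGraph (Fin n),
      piInt t G c ≤ piFrac t G c + ρ * (n : ℝ) ^ t := by
  intro ρ hρ
  have hct : 0 < c t := zero_lt_one.trans_le (hc1 t le_rfl)
  obtain ⟨s, hts, hcs⟩ := exists_cost_le_mul_choose ht hct.le hstep (half_pos hρ)
  obtain ⟨n₀, H⟩ := exists_isIntDecomp_cost_le ht hc hct hstep hts (half_pos hρ)
  refine ⟨n₀, fun n hn G => ?_⟩
  rw [← sub_le_iff_le_add]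
  obtain ⟨f₀, hf₀, -⟩ := exists_isIntDecomp_of_packing (t := t) (G := G) (M := ∅) (by omega)
    (by simp) (by simp) c
  refine le_csInf ⟨_, f₀, hf₀.1, rfl⟩ ?_
  rintro _ ⟨f, hf, rfl⟩
  obtain ⟨g, hg, hgs, hgf⟩ :=
    hf.exists_truncation_cost_le hc (half_pos hρ).le (by omega) hts hcs
  obtain ⟨h, hh, hhg⟩ := H n hn.le G g hg hgs
  have hle : piInt t G c ≤ cliqueCost c h := by
    refine csInf_le ⟨0, ?_⟩ ⟨h, hh, rfl⟩
    rintro _ ⟨f', hf', rfl⟩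
    exact cliqueCost_nonneg hc hf'.1
  rw [Fintype.card_fin] at hgf
  linarith
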